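/- arXiv:math/0602143 — 3 statements merged into one kernel-verified Lean document; each statement's English description precedes it below -/
import Mathlib

section
/- If a permutation class C is contained in Grid(M) for some matrix M with entries in {0, 1, −1} whose bipartite graph G(M) is a matching (every vertex has degree at most 1), then there is a polynomial p and an integer N such that the number of permutations of length n in C equals p(n) for all n ≥ N. -/
/-- `σ ≤ π`: the permutation `π` contains the pattern `σ`, i.e. `π` has a subsequence
in the same relative order as `σ`. -/
def PermContains {k n : ℕ} (σ : Equiv.Perm (Fin k)) (π : Equiv.Perm (Fin n)) : Prop :=
  ∃ f : Fin k → Fin n, StrictMono f ∧ ∀ i j : Fin k, σ i < σ j ↔ π (f i) < π (f j)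

/-- A permutation class: a set of permutations (of each length) closed downward
under the containment order. -/
def IsPermClass (C : ∀ n : ℕ, Set (Equiv.Perm (Fin n))) : Prop :=
  ∀ (k n : ℕ) (σ : Equiv.Perm (Fin k)) (π : Equiv.Perm (Fin n)),
    π ∈ C n → PermContains σ π → σ ∈ C k
/-- The point `i` (with value `π i`) lies in the block of the gridding `(c, r)`
indexed by column `k` and row `l`. -/
def InBlock {n t u : ℕ} (π : Equiv.Perm (Fin n)) (c : Fin (t + 1) → ℕ) (r : Fin (u + 1) → ℕ)
    (k : Fin t) (l : Fin u) (i : Fin n) : Prop :=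
  c k.castSucc ≤ (i : ℕ) ∧ (i : ℕ) < c k.succ ∧
    r l.castSucc ≤ (π i : ℕ) ∧ (π i : ℕ) < r l.succ

/-- `(c, r)` is an `M`-gridding of `π`: each block is increasing, decreasing or empty
according to the corresponding entry of the `t × u` matrix `M` (entries in {0, 1, -1},
columns indexed by `Fin t`, rows by `Fin u`). -/
def IsGridding {n t u : ℕ} (M : Fin t → Fin u → SignType) (π : Equiv.Perm (Fin n))
    (c : Fin (t + 1) → ℕ) (r : Fin (u + 1) → ℕ) : Prop :=
  Monotone c ∧ Monotone r ∧ c 0 = 0 ∧ c (Fin.last t) = n ∧ r 0 = 0 ∧ r (Fin.last u) = n ∧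
    ∀ (k : Fin t) (l : Fin u),
      (M k l = 1 → ∀ i j : Fin n,
        InBlock π c r k l i → InBlock π c r k l j → i < j → π i < π j) ∧
      (M k l = -1 → ∀ i j : Fin n,
        InBlock π c r k l i → InBlock π c r k l j → i < j → π j < π i) ∧
      (M k l = 0 → ∀ i : Fin n, ¬ InBlock π c r k l i)

/-- `π ∈ Grid(M)`: the permutation `π` possesses an `M`-gridding. -/
def InGrid {n t u : ℕ} (M : Fin t → Fin u → SignType) (π : Equiv.Perm (Fin n)) : Prop :=
  ∃ c r, IsGridding M π c r
/-- The bipartite graph `G(M)` is a matching: every vertex (column or row) is incident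
to at most one edge, i.e. every column and every row of `M` has at most one nonzero entry. -/
def IsMatchingMat {t u : ℕ} (M : Fin t → Fin u → SignType) : Prop :=
  (∀ (k : Fin t) (l l' : Fin u), M k l ≠ 0 → M k l' ≠ 0 → l = l') ∧
  (∀ (k k' : Fin t) (l : Fin u), M k l ≠ 0 → M k' l ≠ 0 → k = k')

/-!
Every permutation decomposes uniquely into maximal monotone intervals: consecutive positions mapped
monotonically onto consecutive values. Two intersecting monotone intervals have a monotone union, so
the maximal ones are the classes of an equivalence relation. Their number does not increase when
passing to a contained permutation, and in the grid class of a matching it is at most the number of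
columns: the points of a column lie in a single cell, which is alone in its row, so they form a
monotone interval.

A permutation with `m` maximal monotone intervals is thus encoded by a pattern of length `m`, a sign
for each entry, and the vector of lengths of the intervals. For a fixed pattern and fixed signs,
increasing the lengths produces a permutation containing the original one, so the members of a class
correspond to a lower set in `ℕ ^ m`. By Dickson's lemma, membership in a lower set, or in a
difference of two of them, only depends on the vector truncated at some height `K`. The vectors with
a given sum and a given truncation are counted by a binomial coefficient, which is eventually a
polynomial in the sum.
-/

open Filter Set
open scoped Finset

lemma ncard_eq_sum_ncard_fiber {α β : Type*} {s : Set α} (hs : s.Finite) (f : α → β)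
    (t : Finset β) (hf : ∀ a ∈ s, f a ∈ t) :
    s.ncard = ∑ b ∈ t, {a | a ∈ s ∧ f a = b}.ncard := by
  classical
  lift s to Finset α using hs
  rw [ncard_coe_finset, Finset.card_eq_sum_card_fiberwise hf]
  exact Finset.sum_congr rfl fun b _ => by rw [← ncard_coe_finset, Finset.coe_filter]; rfl

/-- The sequence `f` agrees with a rational polynomial from some index on. -/
def EventuallyPolynomial (f : ℕ → ℕ) : Prop :=
  ∃ p : Polynomial ℚ, ∀ᶠ n : ℕ in atTop, (f n : ℚ) = p.eval (n : ℚ)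

lemma EventuallyPolynomial.congr {f g : ℕ → ℕ} (hf : EventuallyPolynomial f) (h : f =ᶠ[atTop] g) :
    EventuallyPolynomial g := by
  obtain ⟨p, hp⟩ := hf
  exact ⟨p, by filter_upwards [hp, h] with n hpn hn using hn ▸ hpn⟩

lemma EventuallyPolynomial.sum {κ : Type*} (s : Finset κ) {f : κ → ℕ → ℕ}
    (hf : ∀ i ∈ s, EventuallyPolynomial (f i)) : EventuallyPolynomial fun n => ∑ i ∈ s, f i n := by
  choose! p hp using hf
  refine ⟨∑ i ∈ s, p i, ?_⟩
  filter_upwards [(Finset.eventually_all s).mpr hp] with n hn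
  rw [Nat.cast_sum, Polynomial.eval_finsetSum]
  exact Finset.sum_congr rfl hn

lemma eventuallyPolynomial_multichoose_sub (d k : ℕ) :
    EventuallyPolynomial fun n => d.multichoose (n - k) := by
  cases d with
  | zero =>
    refine ⟨0, ?_⟩
    filter_upwards [eventually_gt_atTop k] with n hn
    obtain ⟨r, hr⟩ := Nat.exists_eq_succ_of_ne_zero (Nat.sub_ne_zero_of_lt hn)
    simp [hr]
  | succ d =>
    refine ⟨Polynomial.preHilbertPoly ℚ d k, ?_⟩
    filter_upwards [eventually_ge_atTop k] with n hn
    rw [Polynomial.preHilbertPoly_eq_choose_sub_add ℚ d hn, Nat.multichoose_eq,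
      show d + 1 + (n - k) - 1 = n - k + d by omega, Nat.choose_symm_add]

section Truncation

variable {ι : Type*}

/-- Membership in `S` only depends on the truncation of a vector at height `K`, for all large `K`;
equivalently, `S` is a finite union of sets which prescribe some coordinates and bound the others
from below. -/
def IsTruncationInvariant (S : Set (ι → ℕ)) : Prop :=
  ∀ᶠ K : ℕ in atTop, ∀ a : ι → ℕ, (a ⊓ fun _ => K) ∈ S ↔ a ∈ S

namespace IsTruncationInvariant

variable {S T : Set (ι → ℕ)}

lemma inter (hS : IsTruncationInvariant S) (hT : IsTruncationInvariant T) :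
    IsTruncationInvariant (S ∩ T) := by
  filter_upwards [hS, hT] with K hSK hTK a using and_congr (hSK a) (hTK a)

lemma sdiff (hS : IsTruncationInvariant S) (hT : IsTruncationInvariant T) :
    IsTruncationInvariant (S \ T) := by
  filter_upwards [hS, hT] with K hSK hTK a using and_congr (hSK a) (not_congr (hTK a))

end IsTruncationInvariant

/-- By Dickson's lemma the complement of a lower set has finitely many minimal elements, and
truncating above all their coordinates does not affect which of them lie below a vector. -/
lemma IsTruncationInvariant.of_isLowerSet [Finite ι] {S : Set (ι → ℕ)} (hS : IsLowerSet S) :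
    IsTruncationInvariant S := by
  have : Fintype ι := Fintype.ofFinite ι
  have hfin : {b | Minimal (· ∈ Sᶜ) b}.Finite :=
    WellQuasiOrderedLE.finite_of_isAntichain (setOfPred_minimal_antichain _)
  obtain ⟨B, hB⟩ := hfin.bddAbove
  filter_upwards [eventually_ge_atTop (Finset.univ.sup B)] with K hK a
  refine ⟨fun ha => ?_, hS inf_le_left⟩
  by_contra hna
  obtain ⟨b, hba, hb⟩ := exists_minimal_le_of_wellFoundedLT (· ∈ Sᶜ) a hna
  have hbK : b ≤ fun _ => K := fun j =>
    (hB hb j).trans ((Finset.le_sup (Finset.mem_univ j)).trans hK)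
  exact hb.prop (hS (le_inf hba hbK) ha)

variable [Fintype ι]

lemma finite_setOf_sum_eq (n : ℕ) : {a : ι → ℕ | ∑ j, a j = n}.Finite := by
  classical
  exact (Finset.piAntidiag Finset.univ n).finite_toSet.subset fun a ha => by simpa using ha

/-- Subtracting `b` leaves an arbitrary vector supported on the truncated coordinates. -/
lemma ncard_truncation_eq {K : ℕ} {b : ι → ℕ} (hb : ∀ j, b j ≤ K) {n : ℕ} (hn : ∑ j, b j ≤ n) :
    {a : ι → ℕ | ∑ j, a j = n ∧ (a ⊓ fun _ => K) = b}.ncard =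
      (#{j | b j = K}).multichoose (n - ∑ j, b j) := by
  classical
  rw [← Finset.card_finsuppAntidiag_nat_eq_multichoose, ← ncard_coe_finset]
  symm
  refine BijOn.ncard_eq (f := fun c : ι →₀ ℕ => b + ⇑c) ⟨fun c hc => ?_, ?_, fun a ha => ?_⟩
  · obtain ⟨hsum, hsupp⟩ := Finset.mem_finsuppAntidiag.1 hc
    have hcK : ∀ j, c j ≠ 0 → b j = K := fun j hj => by
      simpa using hsupp (Finsupp.mem_support_iff.2 hj)
    rw [Finset.sum_filter_of_ne fun j _ => hcK j] at hsum
    refine ⟨by simp only [Pi.add_apply, Finset.sum_add_distrib]; omega, funext fun j => ?_⟩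
    have := hcK j
    have := hb j
    simp only [Pi.inf_apply, Pi.add_apply]
    omega
  · exact fun c _ c' _ h => DFunLike.coe_injective (add_left_cancel h)
  · obtain ⟨hsum, hab⟩ := ha
    have hab : ∀ j, min (a j) K = b j := fun j => congrFun hab j
    have hle : ∀ j, b j ≤ a j := fun j => by grind
    refine ⟨Finsupp.equivFunOnFinite.symm (a - b), ?_, ?_⟩
    · have hsupp : ∀ j, a j - b j ≠ 0 → b j = K := fun j hj => by grind
      refine Finset.mem_finsuppAntidiag.2 ⟨?_, fun j hj => ?_⟩
      · exact (Finset.sum_filter_of_ne fun j _ => hsupp j).trans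
          (by rw [Finset.sum_tsub_distrib _ fun j _ => hle j, hsum])
      · simpa using hsupp j (by simpa using hj)
    · ext j
      simp [hle j]

lemma IsTruncationInvariant.eventuallyPolynomial {S : Set (ι → ℕ)} (hS : IsTruncationInvariant S) :
    EventuallyPolynomial fun n => {a | a ∈ S ∧ ∑ j, a j = n}.ncard := by
  classical
  obtain ⟨K, hK⟩ := hS.exists
  have hsum := EventuallyPolynomial.sum ((Finset.Iic fun _ : ι => K).filter (· ∈ S))
    fun b _ => eventuallyPolynomial_multichoose_sub #{j | b j = K} (∑ j, b j)
  refine hsum.congr ?_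
  filter_upwards [eventually_ge_atTop (Fintype.card ι * K)] with n hn
  rw [ncard_eq_sum_ncard_fiber ((finite_setOf_sum_eq n).subset fun a ha => ha.2)
    (fun a => a ⊓ fun _ => K) ((Finset.Iic fun _ : ι => K).filter (· ∈ S))
    fun a ha => by simpa [hK] using ha.1]
  refine Finset.sum_congr rfl fun b hb => ?_
  obtain ⟨hbK, hbS⟩ : b ≤ (fun _ => K) ∧ b ∈ S := by simpa using hb
  have hbn : ∑ j, b j ≤ n := by
    have := Finset.sum_le_card_nsmul Finset.univ b K fun j _ => hbK j
    exact this.trans (by simpa using hn)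
  rw [← ncard_truncation_eq hbK hbn]
  congr 1
  ext a
  have : (a ⊓ fun _ => K) = b → a ∈ S := fun h => (hK a).1 (h ▸ hbS)
  simp only [mem_ofPred_eq]
  tauto

end Truncation

section FiberCard

/-- The sizes of the fibres of `g`. A monotone map from `Fin n` to `Fin m` is a division of `Fin n`
into `m` consecutive intervals, of which these are the lengths. -/
def fiberCard {α β : Type*} [Fintype α] [DecidableEq β] (g : α → β) (j : β) : ℕ :=
  #{i | g i = j}

lemma sum_fiberCard {α β : Type*} [Fintype α] [Fintype β] [DecidableEq β] (g : α → β) :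
    ∑ j, fiberCard g j = Fintype.card α :=
  (Finset.card_eq_sum_card_fiberwise fun _ _ => Finset.mem_coe.2 (Finset.mem_univ _)).symm

lemma exists_strictMono_comp_eq {α β γ : Type*} [Fintype α] [LinearOrder α] [Fintype β]
    [LinearOrder β] [LinearOrder γ] {g : α → γ} {g' : β → γ} (hg : Monotone g) (hg' : Monotone g')
    (h : fiberCard g ≤ fiberCard g') : ∃ F : α → β, StrictMono F ∧ g' ∘ F = g := by
  have hfiber (j : γ) : ∃ f : ∀ i, g i = j → β,
      (∀ i hi, g' (f i hi) = j) ∧ ∀ i hi i' hi', i < i' → f i hi < f i' hi' := by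
    let e := (({i | g i = j} : Finset α).orderIsoOfFin rfl).symm
    let e' := ({i | g' i = j} : Finset β).orderEmbOfFin rfl
    refine ⟨fun i hi => e' (Fin.castLE (h j) (e ⟨i, by simpa using hi⟩)), fun i hi => ?_,
      fun i hi i' hi' hlt => e'.strictMono (e.strictMono hlt)⟩
    exact (Finset.mem_filter.1 (Finset.orderEmbOfFin_mem {x | g' x = j} rfl _)).2
  choose f hf hlt using hfiber
  have hcomp (i : α) : g' (f (g i) i rfl) = g i := hf _ _ _
  refine ⟨fun i => f (g i) i rfl, fun i i' hii' => ?_, funext hcomp⟩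
  rcases (hg hii'.le).eq_or_lt with heq | hgt
  · have hcongr (j : γ) (hj : g i' = j) : f j i' hj = f (g i') i' rfl := by subst hj; rfl
    exact (hlt _ i rfl i' heq.symm hii').trans_eq (hcongr _ _)
  · exact hg'.reflect_lt (by rwa [hcomp, hcomp])

variable {m n : ℕ}

lemma injOn_fiberCard_monotone : InjOn (fiberCard (α := Fin n) (β := Fin m)) {g | Monotone g} := by
  intro g hg g' hg' h
  obtain ⟨F, hF, rfl⟩ := exists_strictMono_comp_eq hg hg' h.le
  rw [le_antisymm hF.le_id hF.id_le, Function.comp_id]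

lemma exists_monotone_fiberCard_eq {a : Fin m → ℕ} (ha : ∑ j, a j = n) :
    ∃ g : Fin n → Fin m, Monotone g ∧ fiberCard g = a := by
  let e : Fin n ≃o Σₗ j, Fin (a j) := Fintype.orderIsoFinOfCardEq _ (by simp [ha])
  refine ⟨fun i => (e i).1, fun i i' h => ?_, ?_⟩
  · exact (Sigma.Lex.le_def.1 (e.monotone h)).elim le_of_lt fun ⟨h, _⟩ => h.le
  · ext j
    calc fiberCard (fun i => (e i).1) j = Fintype.card {x : Σ j, Fin (a j) // x.1 = j} := by
          rw [fiberCard, ← Fintype.card_subtype]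
          exact Fintype.card_congr (e.toEquiv.subtypeEquiv fun _ => Iff.rfl)
      _ = a j := by rw [Fintype.card_congr (Equiv.sigmaSubtype j), Fintype.card_fin]

end FiberCard

section Inflation

lemma sort_inv_lt_sort_inv {n : ℕ} {α : Type*} [LinearOrder α] {w : Fin n → α}
    (hw : Function.Injective w) {i j : Fin n} :
    (Tuple.sort w)⁻¹ i < (Tuple.sort w)⁻¹ j ↔ w i < w j := by
  have hmono : StrictMono (w ∘ Tuple.sort w) :=
    (Tuple.monotone_sort w).strictMono_of_injective (hw.comp (Tuple.sort w).injective)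
  rw [← hmono.lt_iff_lt]
  simp

lemma perm_ext_of_lt_iff_lt {n : ℕ} {π σ : Equiv.Perm (Fin n)}
    (h : ∀ i j, π i < π j ↔ σ i < σ j) : π = σ := by
  have hmono : StrictMono (π * σ⁻¹) := fun i j hij => (h _ _).2 (by simpa using hij)
  have : ⇑(π * σ⁻¹) = id := le_antisymm hmono.le_id hmono.id_le
  exact mul_inv_eq_one.1 (Equiv.ext (congrFun this))

variable {m n n' : ℕ} (ρ : Equiv.Perm (Fin m)) (s : Fin m → Bool)

/-- For a monotone block map `g`, the inflation of the permutation `ρ`: the `j`-th entry of `ρ` is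
replaced by a run of `fiberCard g j` consecutive values, increasing if `s j` and decreasing
otherwise. It is defined as the standardization of a word of pairs in lexicographic order. -/
noncomputable def inflate (g : Fin n → Fin m) : Equiv.Perm (Fin n) :=
  (Tuple.sort fun i => toLex (ρ (g i), if s (g i) then (i : ℤ) else -i))⁻¹

variable {ρ s}

lemma inflate_lt_iff {g : Fin n → Fin m} {i i' : Fin n} :
    inflate ρ s g i < inflate ρ s g i' ↔
      ρ (g i) < ρ (g i') ∨ g i = g i' ∧ if s (g i) then i < i' else i' < i := by
  rw [inflate, sort_inv_lt_sort_inv, Prod.Lex.toLex_lt_toLex]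
  · simp only [ρ.injective.eq_iff]
    grind
  · intro k l hkl
    have heq := toLex.injective hkl
    have hg : g k = g l := ρ.injective (congrArg Prod.fst heq)
    have hsnd := congrArg Prod.snd heq
    simp only [hg] at hsnd
    split_ifs at hsnd <;> omega

lemma permContains_inflate {g : Fin n → Fin m} {g' : Fin n' → Fin m} (hg : Monotone g)
    (hg' : Monotone g') (h : fiberCard g ≤ fiberCard g') :
    PermContains (inflate ρ s g) (inflate ρ s g') := by
  obtain ⟨F, hF, rfl⟩ := exists_strictMono_comp_eq hg hg' h
  exact ⟨F, hF, fun i j => by simp only [inflate_lt_iff, Function.comp_apply, hF.lt_iff_lt]⟩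

end Inflation

section OrdConnected

variable {α : Type*} [LinearOrder α] {s t : Set α}

lemma ordConnected_union_of_nonempty_inter (hs : s.OrdConnected) (ht : t.OrdConnected)
    (h : (s ∩ t).Nonempty) : (s ∪ t).OrdConnected := by
  obtain ⟨x, hxs, hxt⟩ := h
  refine ordConnected_of_uIcc_subset_left (x := x) fun y hy => ?_
  exact hy.elim (fun hy => (hs.uIcc_subset hxs hy).trans subset_union_left)
    fun hy => (ht.uIcc_subset hxt hy).trans subset_union_right

lemma lt_iff_lt_of_disjoint_ordConnected (hs : s.OrdConnected) (ht : t.OrdConnected)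
    (hst : Disjoint s t) {a a' b b' : α} (ha : a ∈ s) (ha' : a' ∈ s) (hb : b ∈ t) (hb' : b' ∈ t) :
    a < b ↔ a' < b' := by
  suffices key : ∀ {a a' b b' : α}, a ∈ s → a' ∈ s → b ∈ t → b' ∈ t → a < b → a' < b' from
    ⟨key ha ha' hb hb', key ha' ha hb' hb⟩
  intro a a' b b' ha ha' hb hb' hab
  by_contra! hba'
  rcases le_total b a' with h | h
  · exact disjoint_left.1 hst (hs.out ha ha' ⟨hab.le, h⟩) hb
  · exact disjoint_left.1 hst ha' (ht.out hb' hb ⟨hba', h⟩)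

lemma strictMonoOn_union_of_nonempty_inter {β : Type*} [Preorder β] {f : α → β}
    (hs : s.OrdConnected) (ht : t.OrdConnected) (h : (s ∩ t).Nonempty) (hfs : StrictMonoOn f s)
    (hft : StrictMonoOn f t) : StrictMonoOn f (s ∪ t) := by
  obtain ⟨x, hxs, hxt⟩ := h
  suffices key : ∀ {u v : Set α}, u.OrdConnected → v.OrdConnected → x ∈ u → x ∈ v →
      StrictMonoOn f u → StrictMonoOn f v → ∀ a ∈ u, ∀ b ∈ v, a < b → f a < f b by
    rintro a (ha | ha) b (hb | hb) hab
    exacts [hfs ha hb hab, key hs ht hxs hxt hfs hft a ha b hb hab,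
      key ht hs hxt hxs hft hfs a ha b hb hab, hft ha hb hab]
  intro u v hu hv hxu hxv hfu hfv a ha b hb hab
  rcases lt_or_ge x a with hxa | hax
  · exact hfv (hv.out hxv hb ⟨hxa.le, hab.le⟩) hb hab
  rcases le_or_gt b x with hbx | hxb
  · exact hfu ha (hu.out ha hxu ⟨hab.le, hbx⟩) hab
  · exact (hfu.monotoneOn ha hxu hax).trans_lt (hfv hxv hb hxb)

end OrdConnected

section MonotoneInterval

/-- A set of consecutive positions which `π` maps monotonically onto a set of consecutive values. -/
structure IsMonotoneInterval {n : ℕ} (π : Equiv.Perm (Fin n)) (I : Set (Fin n)) : Prop where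
  ordConnected : I.OrdConnected
  ordConnected_image : (π '' I).OrdConnected
  strictMonoOn_or_strictAntiOn : StrictMonoOn π I ∨ StrictAntiOn π I

namespace IsMonotoneInterval

variable {k n : ℕ} {σ : Equiv.Perm (Fin k)} {π : Equiv.Perm (Fin n)} {I J : Set (Fin n)}

lemma singleton (i : Fin n) : IsMonotoneInterval π {i} where
  ordConnected := ordConnected_singleton
  ordConnected_image := by simpa only [image_singleton] using ordConnected_singleton
  strictMonoOn_or_strictAntiOn := Or.inl (subsingleton_singleton.strictMonoOn π)

lemma mem_of_apply_mem_Icc (hI : IsMonotoneInterval π I) {a b x : Fin n} (ha : a ∈ I) (hb : b ∈ I)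
    (hx : π x ∈ Icc (π a) (π b)) : x ∈ I :=
  π.injective.mem_set_image.1
    (hI.ordConnected_image.out (mem_image_of_mem π ha) (mem_image_of_mem π hb) hx)

lemma subset_or_subset (hI : IsMonotoneInterval π I) (hJ : IsMonotoneInterval π J)
    (hImono : StrictMonoOn π I) (hJanti : StrictAntiOn π J) (hIJ : (I ∩ J).Nonempty) :
    I ⊆ J ∨ J ⊆ I := by
  obtain ⟨x, hxI, hxJ⟩ := hIJ
  by_contra! hsub
  obtain ⟨⟨a, haI, haJ⟩, b, hbJ, hbI⟩ := hsub.imp not_subset.1 not_subset.1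
  rcases lt_or_gt_of_ne (ne_of_mem_of_not_mem hxJ haJ) with hxa | hax
  · have hbx : b < x := by
      by_contra! hxb
      exact (le_total a b).elim (fun hab => haJ (hJ.ordConnected.out hxJ hbJ ⟨hxa.le, hab⟩))
        fun hba => hbI (hI.ordConnected.out hxI haI ⟨hxb, hba⟩)
    have hπa : π x ≤ π a := (hImono hxI haI hxa).le
    have hπb : π x ≤ π b := (hJanti hbJ hxJ hbx).le
    exact (le_total (π a) (π b)).elim
      (fun hab => haJ (hJ.mem_of_apply_mem_Icc hxJ hbJ ⟨hπa, hab⟩))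
      fun hba => hbI (hI.mem_of_apply_mem_Icc hxI haI ⟨hπb, hba⟩)
  · have hxb : x < b := by
      by_contra! hbx
      exact (le_total a b).elim (fun hab => hbI (hI.ordConnected.out haI hxI ⟨hab, hbx⟩))
        fun hba => haJ (hJ.ordConnected.out hbJ hxJ ⟨hba, hax.le⟩)
    have hπa : π a ≤ π x := (hImono haI hxI hax).le
    have hπb : π b ≤ π x := (hJanti hxJ hbJ hxb).le
    exact (le_total (π a) (π b)).elim
      (fun hab => hbI (hI.mem_of_apply_mem_Icc haI hxI ⟨hab, hπb⟩))
      fun hba => haJ (hJ.mem_of_apply_mem_Icc hbJ hxJ ⟨hba, hπa⟩)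

lemma union (hI : IsMonotoneInterval π I) (hJ : IsMonotoneInterval π J) (hIJ : (I ∩ J).Nonempty) :
    IsMonotoneInterval π (I ∪ J) := by
  have hJI : (J ∩ I).Nonempty := inter_comm I J ▸ hIJ
  have of_mixed {A B : Set (Fin n)} (hA : IsMonotoneInterval π A) (hB : IsMonotoneInterval π B)
      (hAB : A ⊆ B ∨ B ⊆ A) : IsMonotoneInterval π (A ∪ B) :=
    hAB.elim (fun h => (union_eq_right.2 h).symm ▸ hB) fun h => (union_eq_left.2 h).symm ▸ hA
  have of_sign (h : StrictMonoOn π (I ∪ J) ∨ StrictAntiOn π (I ∪ J)) :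
      IsMonotoneInterval π (I ∪ J) :=
    ⟨ordConnected_union_of_nonempty_inter hI.ordConnected hJ.ordConnected hIJ,
      image_union π I J ▸ ordConnected_union_of_nonempty_inter hI.ordConnected_image
        hJ.ordConnected_image ((hIJ.image π).mono (image_inter_subset π I J)), h⟩
  rcases hI.strictMonoOn_or_strictAntiOn with hIs | hIs <;>
    rcases hJ.strictMonoOn_or_strictAntiOn with hJs | hJs
  · exact of_sign (Or.inl (strictMonoOn_union_of_nonempty_inter hI.ordConnected hJ.ordConnected
      hIJ hIs hJs))
  · exact of_mixed hI hJ (hI.subset_or_subset hJ hIs hJs hIJ)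
  · exact of_mixed hI hJ (hJ.subset_or_subset hI hJs hIs hJI).symm
  · exact of_sign (Or.inr (strictMonoOn_union_of_nonempty_inter hI.ordConnected hJ.ordConnected
      hIJ hIs.dual_right hJs.dual_right).dual_right)

lemma preimage {f : Fin k → Fin n} (hf : StrictMono f)
    (hlt : ∀ i j, σ i < σ j ↔ π (f i) < π (f j)) (hI : IsMonotoneInterval π I) :
    IsMonotoneInterval σ (f ⁻¹' I) where
  ordConnected := hI.ordConnected.preimage_mono hf.monotone
  ordConnected_image := by
    refine ⟨?_⟩
    rintro _ ⟨a, ha, rfl⟩ _ ⟨b, hb, rfl⟩ y hy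
    obtain ⟨x, rfl⟩ := σ.surjective y
    have hle (i j) : σ i ≤ σ j ↔ π (f i) ≤ π (f j) := by simpa using (hlt j i).not
    exact mem_image_of_mem σ (hI.mem_of_apply_mem_Icc ha hb (hy.imp (hle _ _).1 (hle _ _).1))
  strictMonoOn_or_strictAntiOn := hI.strictMonoOn_or_strictAntiOn.imp
    (fun h i hi j hj hij => (hlt _ _).2 (h hi hj (hf hij)))
    fun h i hi j hj hij => (hlt _ _).2 (h hi hj (hf hij))

end IsMonotoneInterval

variable {m n : ℕ} {π : Equiv.Perm (Fin n)}

lemma isMonotoneInterval_inflate_preimage {ρ : Equiv.Perm (Fin m)} {s : Fin m → Bool}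
    {g : Fin n → Fin m} (hg : Monotone g) (j : Fin m) :
    IsMonotoneInterval (inflate ρ s g) (g ⁻¹' {j}) where
  ordConnected := ordConnected_singleton.preimage_mono hg
  ordConnected_image := by
    refine ⟨?_⟩
    rintro _ ⟨a, rfl, rfl⟩ _ ⟨b, hb, rfl⟩ y ⟨hay, hyb⟩
    obtain ⟨x, rfl⟩ := (inflate ρ s g).surjective y
    rw [← not_lt, inflate_lt_iff, not_or] at hay hyb
    have hρ : ρ (g x) = ρ (g a) := le_antisymm (hb ▸ not_lt.1 hyb.1) (not_lt.1 hay.1)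
    exact mem_image_of_mem _ (ρ.injective hρ)
  strictMonoOn_or_strictAntiOn := by
    cases hs : s j
    · exact Or.inr fun a ha b hb hab => inflate_lt_iff.2 (Or.inr ⟨hb.trans ha.symm, by simp_all⟩)
    · exact Or.inl fun a ha b hb hab => inflate_lt_iff.2 (Or.inr ⟨ha.trans hb.symm, by simp_all⟩)

/-- Two positions are equivalent if they lie in a common monotone interval of `π`. The classes are
the maximal monotone intervals, which are the blocks of the canonical decomposition of `π`. -/
def blockSetoid (π : Equiv.Perm (Fin n)) : Setoid (Fin n) where
  r i j := ∃ I, IsMonotoneInterval π I ∧ i ∈ I ∧ j ∈ I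
  iseqv :=
    { refl i := ⟨{i}, .singleton i, rfl, rfl⟩
      symm := fun ⟨I, hI, hi, hj⟩ => ⟨I, hI, hj, hi⟩
      trans := fun ⟨I, hI, hi, hj⟩ ⟨J, hJ, hj', hk⟩ =>
        ⟨I ∪ J, hI.union hJ ⟨_, hj, hj'⟩, Or.inl hi, Or.inr hk⟩ }

lemma isMonotoneInterval_setOf_blockSetoid (i : Fin n) :
    IsMonotoneInterval π {j | blockSetoid π i j} := by
  obtain ⟨I, ⟨hI, hiI⟩, hmax⟩ := (toFinite {I | IsMonotoneInterval π I ∧ i ∈ I}).exists_maximal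
    ⟨{i}, .singleton i, rfl⟩
  suffices {j | blockSetoid π i j} = I from this ▸ hI
  refine Subset.antisymm ?_ fun j hj => ⟨I, hI, hiI, hj⟩
  rintro j ⟨J, hJ, hiJ, hjJ⟩
  exact hmax ⟨hI.union hJ ⟨i, hiI, hiJ⟩, Or.inl hiI⟩ subset_union_left (Or.inr hjJ)

end MonotoneInterval

section BlockCount

variable {m n k : ℕ} {π : Equiv.Perm (Fin n)}

/-- The number of maximal monotone intervals of `π`. -/
noncomputable def blockCount (π : Equiv.Perm (Fin n)) : ℕ :=
  Nat.card (Quotient (blockSetoid π))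

lemma blockCount_le_card {β : Type*} [Finite β] (F : Fin n → β)
    (hF : ∀ i j, F i = F j → blockSetoid π i j) : blockCount π ≤ Nat.card β :=
  Nat.card_le_card_of_injective (fun q : Quotient (blockSetoid π) => F q.out) fun _ _ h =>
    Quotient.out_equiv_out.1 (hF _ _ h)

lemma PermContains.blockCount_le {σ : Equiv.Perm (Fin k)} (h : PermContains σ π) :
    blockCount σ ≤ blockCount π := by
  obtain ⟨f, hf, hlt⟩ := h
  refine blockCount_le_card (fun i => (⟦f i⟧ : Quotient (blockSetoid π))) fun i j hij => ?_
  obtain ⟨I, hI, hi, hj⟩ := Quotient.exact hij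
  exact ⟨f ⁻¹' I, hI.preimage hf hlt, hi, hj⟩

lemma blockSetoid_iff_of_surjective {g : Fin n → Fin m} (hsurj : Function.Surjective g)
    (hker : ∀ i j, g i = g j → blockSetoid π i j) (hm : blockCount π = m) (i j : Fin n) :
    blockSetoid π i j ↔ g i = g j := by
  let φ (b : Fin m) : Quotient (blockSetoid π) := ⟦Function.surjInv hsurj b⟧
  have hφ (i : Fin n) : φ (g i) = ⟦i⟧ :=
    Quotient.sound (hker _ _ (Function.surjInv_eq hsurj (g i)))
  have hφ_surj : Function.Surjective φ := fun q => ⟨g q.out, by rw [hφ, q.out_eq]⟩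
  have hφ_inj : Function.Injective φ :=
    (hφ_surj.bijective_of_nat_card_le (by simp [← hm, blockCount])).injective
  refine ⟨fun hij => hφ_inj ?_, hker i j⟩
  rw [hφ, hφ, Quotient.sound hij]

lemma exists_monotone_surjective_of_setoid {α : Type*} [LinearOrder α] [Finite α] (r : Setoid α)
    (hr : ∀ a, {b | r a b}.OrdConnected) (hm : Nat.card (Quotient r) = m) :
    ∃ g : α → Fin m, Monotone g ∧ Function.Surjective g ∧ ∀ a b, g a = g b ↔ r a b := by
  let rep (a : α) : range (Quotient.out : Quotient r → α) := ⟨Quotient.out ⟦a⟧, mem_range_self _⟩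
  have hrep_eq (a b : α) : rep a = rep b ↔ r a b := by
    rw [Subtype.mk.injEq, Quotient.out_inj, Quotient.eq]
  have hrep_mono : Monotone rep := fun a b hab => by
    by_cases hrab : r a b
    · exact ((hrep_eq a b).2 hrab).le
    have hdisj : Disjoint {c | r a c} {c | r b c} := disjoint_left.2 fun c hac hbc =>
      hrab (r.trans hac (r.symm hbc))
    exact ((lt_iff_lt_of_disjoint_ordConnected (hr a) (hr b) hdisj (r.refl a)
      (r.symm (Quotient.mk_out a)) (r.refl b) (r.symm (Quotient.mk_out b))).1
      (hab.lt_of_ne fun h => hrab (h ▸ r.refl a))).le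
  have hrep_surj : Function.Surjective rep := by
    rintro ⟨_, q, rfl⟩
    exact ⟨q.out, Subtype.ext (congrArg Quotient.out q.out_eq)⟩
  have : Fintype (range (Quotient.out : Quotient r → α)) := Fintype.ofFinite _
  let e := Fintype.orderIsoFinOfCardEq (range (Quotient.out : Quotient r → α))
    (Fintype.card_eq_nat_card.trans
      ((Nat.card_range_of_injective Quotient.out_injective).trans hm))
  exact ⟨e.symm ∘ rep, e.symm.monotone.comp hrep_mono, e.symm.surjective.comp hrep_surj,
    fun a b => e.symm.injective.eq_iff.trans (hrep_eq a b)⟩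

lemma eq_of_monotone_of_surjective {α : Type*} [LinearOrder α] {g g' : α → Fin m} (hg : Monotone g)
    (hg' : Monotone g') (hsurj : Function.Surjective g) (h : ∀ a b, g a = g b ↔ g' a = g' b) :
    g = g' := by
  let F (j : Fin m) : Fin m := g' (Function.surjInv hsurj j)
  have hF : StrictMono F := fun j j' hjj' => by
    rw [← Function.surjInv_eq hsurj j, ← Function.surjInv_eq hsurj j'] at hjj'
    exact (hg' (hg.reflect_lt hjj').le).lt_of_ne ((h _ _).not.1 hjj'.ne)
  funext a
  calc g a = F (g a) := (congrFun (le_antisymm hF.le_id hF.id_le) (g a)).symm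
    _ = g' a := (h _ _).1 (Function.surjInv_eq hsurj (g a))

end BlockCount

section Grid

variable {n t u : ℕ}

lemma exists_monotone_mem_Ico {c : Fin (t + 1) → ℕ} (hc : Monotone c) (h0 : c 0 = 0)
    (hl : c (Fin.last t) = n) :
    ∃ col : Fin n → Fin t, Monotone col ∧
      ∀ i, c (col i).castSucc ≤ i ∧ (i : ℕ) < c (col i).succ := by
  have hex (i : Fin n) : ∃ k : Fin t, c k.castSucc ≤ i ∧ (i : ℕ) < c k.succ := by
    by_contra! hstep
    have hle (k : Fin (t + 1)) : c k ≤ i := by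
      induction k using Fin.induction with
      | zero => exact h0.trans_le i.val.zero_le
      | succ k ih => exact hstep k ih
    exact ((hle (Fin.last t)).trans_lt i.isLt).ne hl
  choose col hcol using hex
  refine ⟨col, fun i j hij => ?_, hcol⟩
  by_contra! hlt
  have hle : c (col j).succ ≤ c (col i).castSucc := hc (Fin.succ_le_castSucc_iff.2 hlt)
  exact absurd hij (not_le.2 (Fin.lt_def.2 ((hcol j).2.trans_le (hle.trans (hcol i).1))))

lemma InGrid.blockCount_le {M : Fin t → Fin u → SignType} (hM : IsMatchingMat M)
    {π : Equiv.Perm (Fin n)} (h : InGrid M π) : blockCount π ≤ t := by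
  obtain ⟨c, r, hc, hr, hc0, hct, hr0, hru, hblock⟩ := h
  obtain ⟨col, hcol, hcol_mem⟩ := exists_monotone_mem_Ico hc hc0 hct
  obtain ⟨row, hrow, hrow_mem⟩ := exists_monotone_mem_Ico hr hr0 hru
  have hin (i : Fin n) : InBlock π c r (col i) (row (π i)) i :=
    ⟨(hcol_mem i).1, (hcol_mem i).2, (hrow_mem _).1, (hrow_mem _).2⟩
  have hne (i : Fin n) : M (col i) (row (π i)) ≠ 0 := fun h => (hblock _ _).2.2 h i (hin i)
  have hcol_row (i j : Fin n) : col i = col j ↔ row (π i) = row (π j) :=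
    ⟨fun h => hM.1 _ _ _ (hne i) (h ▸ hne j), fun h => hM.2 _ _ _ (hne i) (h ▸ hne j)⟩
  suffices hint : ∀ i, IsMonotoneInterval π (col ⁻¹' {col i}) from
    (blockCount_le_card col fun i j hij => ⟨_, hint i, rfl, hij.symm⟩).trans_eq (Nat.card_fin t)
  have himage (i : Fin n) : π '' (col ⁻¹' {col i}) = row ⁻¹' {row (π i)} := by
    rw [π.image_eq_preimage_symm]
    ext x
    simpa using hcol_row (π.symm x) i
  have hin' (i j : Fin n) (hj : col j = col i) : InBlock π c r (col i) (row (π i)) j :=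
    (hcol_row j i).1 hj ▸ hj ▸ hin j
  refine fun i => ⟨ordConnected_singleton.preimage_mono hcol,
    himage i ▸ ordConnected_singleton.preimage_mono hrow, ?_⟩
  obtain ⟨hpos, hneg, -⟩ := hblock (col i) (row (π i))
  rcases SignType.trichotomy (M (col i) (row (π i))) with h | h | h
  · exact Or.inr fun a ha b hb hab => hneg h a b (hin' i a ha) (hin' i b hb) hab
  · exact absurd h (hne i)
  · exact Or.inl fun a ha b hb hab => hpos h a b (hin' i a ha) (hin' i b hb) hab

end Grid

section NormalForm

variable {m n : ℕ}

/-- The choices which make the signs and lengths of an inflation unique: no block is empty, and a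
block with a single point counts as increasing. -/
def IsReducedLengths (s : Fin m → Bool) (a : Fin m → ℕ) : Prop :=
  ∀ j, a j ≠ 0 ∧ (a j = 1 → s j = true)

lemma isTruncationInvariant_setOf_isReducedLengths (s : Fin m → Bool) :
    IsTruncationInvariant {a | IsReducedLengths s a} := by
  filter_upwards [eventually_ge_atTop 2] with K hK a
  refine forall_congr' fun j => ?_
  simp only [Pi.inf_apply]
  grind

lemma IsReducedLengths.surjective {s : Fin m → Bool} {g : Fin n → Fin m}
    (hs : IsReducedLengths s (fiberCard g)) : Function.Surjective g := fun j => by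
  obtain ⟨i, hi⟩ := Finset.card_ne_zero.1 (hs j).1
  exact ⟨i, (Finset.mem_filter.1 hi).2⟩

lemma exists_inflate_eq_of_surjective {π : Equiv.Perm (Fin n)} {g : Fin n → Fin m}
    (hsurj : Function.Surjective g) (hg : ∀ j, IsMonotoneInterval π (g ⁻¹' {j})) :
    ∃ ρ s, IsReducedLengths s (fiberCard g) ∧ inflate ρ s g = π := by
  classical
  let rep : Fin m → Fin n := Function.surjInv hsurj
  have hrep (j : Fin m) : g (rep j) = j := Function.surjInv_eq hsurj j
  have hρ (j j' : Fin m) := sort_inv_lt_sort_inv (i := j) (j := j')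
    (π.injective.comp (Function.injective_surjInv hsurj))
  refine ⟨(Tuple.sort (π ∘ rep))⁻¹, fun j => decide (StrictMonoOn π (g ⁻¹' {j})),
    fun j => ⟨?_, fun hj => decide_eq_true ?_⟩, perm_ext_of_lt_iff_lt fun i i' => ?_⟩
  · exact Finset.card_ne_zero.2 ⟨rep j, by simp [hrep]⟩
  · have hsub : (g ⁻¹' {j}).Subsingleton := fun i hi i' hi' =>
      Finset.card_le_one.1 hj.le i (by simpa using hi) i' (by simpa using hi')
    exact hsub.strictMonoOn π
  rw [inflate_lt_iff, hρ, Function.comp_apply, Function.comp_apply]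
  by_cases hii' : g i = g i'
  · simp only [hii', lt_irrefl, false_or, true_and, decide_eq_true_iff]
    split_ifs with hmono
    · exact (hmono.lt_iff_lt hii' rfl).symm
    · have hanti := (hg (g i')).strictMonoOn_or_strictAntiOn.resolve_left hmono
      exact (hanti.lt_iff_gt hii' rfl).symm
  · have hdisj : Disjoint (π '' (g ⁻¹' {g i})) (π '' (g ⁻¹' {g i'})) :=
      (disjoint_image_iff π.injective).2 (Disjoint.preimage g (disjoint_singleton.2 hii'))
    rw [or_iff_left (fun h => hii' h.1)]
    exact lt_iff_lt_of_disjoint_ordConnected (hg (g i)).ordConnected_image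
      (hg (g i')).ordConnected_image hdisj (mem_image_of_mem π (hrep _)) (mem_image_of_mem π rfl)
      (mem_image_of_mem π (hrep _)) (mem_image_of_mem π rfl)

/-- `π` is the inflation of `ρ` with signs `s` and block map `g`, written in reduced form. -/
structure IsNormalForm (π : Equiv.Perm (Fin n)) (ρ : Equiv.Perm (Fin m)) (s : Fin m → Bool)
    (g : Fin n → Fin m) : Prop where
  monotone : Monotone g
  isReducedLengths : IsReducedLengths s (fiberCard g)
  inflate_eq : inflate ρ s g = π

lemma exists_isNormalForm {π : Equiv.Perm (Fin n)} (hm : blockCount π = m) :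
    ∃ ρ s g, IsNormalForm (m := m) π ρ s g := by
  obtain ⟨g, hg, hsurj, hker⟩ := exists_monotone_surjective_of_setoid (blockSetoid π)
    (fun i => (isMonotoneInterval_setOf_blockSetoid i).ordConnected) hm
  have hblock (j : Fin m) : IsMonotoneInterval π (g ⁻¹' {j}) := by
    obtain ⟨i, rfl⟩ := hsurj j
    convert isMonotoneInterval_setOf_blockSetoid (π := π) i using 1
    ext x
    exact eq_comm.trans (hker i x)
  obtain ⟨ρ, s, hred, hπ⟩ := exists_inflate_eq_of_surjective hsurj hblock
  exact ⟨ρ, s, g, hg, hred, hπ⟩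

namespace IsNormalForm

variable {π : Equiv.Perm (Fin n)} {ρ ρ' : Equiv.Perm (Fin m)} {s s' : Fin m → Bool}
  {g g' : Fin n → Fin m}

lemma blockSetoid_iff (h : IsNormalForm π ρ s g) (hm : blockCount π = m) (i j : Fin n) :
    blockSetoid π i j ↔ g i = g j := by
  refine blockSetoid_iff_of_surjective h.isReducedLengths.surjective (fun i j hij => ?_) hm i j
  have hI : IsMonotoneInterval π (g ⁻¹' {g i}) :=
    h.inflate_eq ▸ isMonotoneInterval_inflate_preimage h.monotone _
  exact ⟨_, hI, rfl, hij.symm⟩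

lemma apply_lt_apply_iff (h : IsNormalForm π ρ s g) {i j : Fin n} :
    π i < π j ↔ ρ (g i) < ρ (g j) ∨ g i = g j ∧ if s (g i) then i < j else j < i := by
  rw [← h.inflate_eq, inflate_lt_iff]

lemma pattern_unique (h : IsNormalForm π ρ s g) (h' : IsNormalForm π ρ' s' g) : ρ = ρ' := by
  refine perm_ext_of_lt_iff_lt fun j j' => ?_
  obtain ⟨i, rfl⟩ := h.isReducedLengths.surjective j
  obtain ⟨i', rfl⟩ := h.isReducedLengths.surjective j'
  have := h.apply_lt_apply_iff.symm.trans (h'.apply_lt_apply_iff (i := i) (j := i'))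
  grind

lemma signs_unique (h : IsNormalForm π ρ s g) (h' : IsNormalForm π ρ' s' g) : s = s' := by
  funext j
  rcases (Nat.one_le_iff_ne_zero.2 (h.isReducedLengths j).1).eq_or_lt with hj | hj
  · rw [(h.isReducedLengths j).2 hj.symm, (h'.isReducedLengths j).2 hj.symm]
  obtain ⟨i, hi, i', hi', hne⟩ := Finset.one_lt_card.1 hj
  have hg : g i = j ∧ g i' = j := by simpa using And.intro hi hi'
  have := h.apply_lt_apply_iff.symm.trans (h'.apply_lt_apply_iff (i := i) (j := i'))
  grind

lemma unique (h : IsNormalForm π ρ s g) (h' : IsNormalForm π ρ' s' g') (hm : blockCount π = m) :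
    ρ = ρ' ∧ s = s' ∧ g = g' := by
  obtain rfl : g = g' := eq_of_monotone_of_surjective h.monotone h'.monotone
    h.isReducedLengths.surjective fun i j =>
      (h.blockSetoid_iff hm i j).symm.trans (h'.blockSetoid_iff hm i j)
  exact ⟨h.pattern_unique h', h.signs_unique h', rfl⟩

end IsNormalForm

end NormalForm

section Counting

variable {m n : ℕ} {C : ∀ n : ℕ, Set (Equiv.Perm (Fin n))}

/-- The vectors of block lengths whose inflations of `ρ` with signs `s` lie in `C`. -/
def inflationLengths (C : ∀ n : ℕ, Set (Equiv.Perm (Fin n))) (ρ : Equiv.Perm (Fin m))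
    (s : Fin m → Bool) : Set (Fin m → ℕ) :=
  {a | ∃ (n : ℕ) (g : Fin n → Fin m), Monotone g ∧ fiberCard g = a ∧ inflate ρ s g ∈ C n}

/-- The vectors of block lengths of the members of `C` which have a normal form with pattern `ρ`
and signs `s`. -/
def normalFormLengths (C : ∀ n : ℕ, Set (Equiv.Perm (Fin n))) (ρ : Equiv.Perm (Fin m))
    (s : Fin m → Bool) : Set (Fin m → ℕ) :=
  {a | IsReducedLengths s a ∧ a ∈ inflationLengths C ρ s}

variable {ρ : Equiv.Perm (Fin m)} {s : Fin m → Bool}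

lemma fiberCard_mem_inflationLengths {g : Fin n → Fin m} (hg : Monotone g) :
    fiberCard g ∈ inflationLengths C ρ s ↔ inflate ρ s g ∈ C n := by
  refine ⟨?_, fun h => ⟨n, g, hg, rfl, h⟩⟩
  rintro ⟨n', g', hg', hcard, hmem⟩
  obtain rfl : n' = n := by
    simpa only [sum_fiberCard, Fintype.card_fin] using congrArg (∑ j, · j) hcard
  exact injOn_fiberCard_monotone hg' hg hcard ▸ hmem

lemma isLowerSet_inflationLengths (hC : IsPermClass C) : IsLowerSet (inflationLengths C ρ s) := by
  rintro _ a hab ⟨n, g, hg, rfl, hmem⟩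
  obtain ⟨g', hg', hcard⟩ := exists_monotone_fiberCard_eq (a := a) rfl
  exact ⟨_, g', hg', hcard, hC _ _ _ _ hmem (permContains_inflate hg' hg (hcard.trans_le hab))⟩

lemma IsPermClass.blockCount_lt (hC : IsPermClass C) (k : ℕ) :
    IsPermClass fun n => {π ∈ C n | blockCount π < k} :=
  fun _ _ σ π hπ hσπ => ⟨hC _ _ σ π hπ.1 hσπ, hσπ.blockCount_le.trans_lt hπ.2⟩

lemma isTruncationInvariant_normalFormLengths (hC : IsPermClass C) (ρ : Equiv.Perm (Fin m))
    (s : Fin m → Bool) :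
    IsTruncationInvariant (normalFormLengths (fun n => {π ∈ C n | blockCount π = m}) ρ s) := by
  have hlower (k : ℕ) := IsTruncationInvariant.of_isLowerSet
    (isLowerSet_inflationLengths (ρ := ρ) (s := s) (hC.blockCount_lt k))
  convert (isTruncationInvariant_setOf_isReducedLengths s).inter
    ((hlower (m + 1)).sdiff (hlower m)) using 1
  ext a
  obtain ⟨n, g, hg, rfl⟩ : ∃ (n : ℕ) (g : Fin n → Fin m), Monotone g ∧ fiberCard g = a :=
    ⟨_, exists_monotone_fiberCard_eq rfl⟩
  simp only [normalFormLengths, mem_inter_iff, Set.mem_sdiff, mem_ofPred_eq,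
    fiberCard_mem_inflationLengths hg]
  grind

lemma ncard_isNormalForm (hm : ∀ π ∈ C n, blockCount π = m) (ρ : Equiv.Perm (Fin m))
    (s : Fin m → Bool) : {π | π ∈ C n ∧ ∃ g, IsNormalForm π ρ s g}.ncard =
      {a | a ∈ normalFormLengths C ρ s ∧ ∑ j, a j = n}.ncard := by
  let G : Set (Fin n → Fin m) := {g | inflate ρ s g ∈ C n ∧ IsNormalForm (inflate ρ s g) ρ s g}
  have hinflate : BijOn (inflate ρ s) G {π | π ∈ C n ∧ ∃ g, IsNormalForm π ρ s g} := by
    refine ⟨fun g hg => ⟨hg.1, g, hg.2⟩, fun g hg g' hg' h => ?_, ?_⟩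
    · exact (hg.2.unique (h ▸ hg'.2) (hm _ hg.1)).2.2
    · rintro _ ⟨hπ, g, hg⟩
      obtain rfl := hg.inflate_eq
      exact ⟨g, ⟨hπ, hg⟩, rfl⟩
  have hlengths : BijOn fiberCard G
      {a | a ∈ normalFormLengths C ρ s ∧ ∑ j, a j = n} := by
    refine ⟨fun g hg => ?_, injOn_fiberCard_monotone.mono fun g hg => hg.2.monotone, ?_⟩
    · exact ⟨⟨hg.2.isReducedLengths, (fiberCard_mem_inflationLengths hg.2.monotone).2 hg.1⟩,
        (sum_fiberCard g).trans (Fintype.card_fin n)⟩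
    · rintro a ⟨⟨hred, hmem⟩, hsum⟩
      obtain ⟨g, hg, rfl⟩ := exists_monotone_fiberCard_eq hsum
      exact ⟨g, ⟨(fiberCard_mem_inflationLengths hg).1 hmem, hg, hred, rfl⟩, rfl⟩
  exact hinflate.ncard_eq.symm.trans hlengths.ncard_eq

lemma ncard_eq_sum_ncard_normalFormLengths (hm : ∀ π ∈ C n, blockCount π = m) :
    (C n).ncard = ∑ x : Equiv.Perm (Fin m) × (Fin m → Bool),
      {a | a ∈ normalFormLengths C x.1 x.2 ∧ ∑ j, a j = n}.ncard := by
  choose! ρ s hnf using fun π hπ => exists_isNormalForm (hm π hπ)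
  rw [ncard_eq_sum_ncard_fiber (toFinite (C n)) (fun π => (ρ π, s π)) Finset.univ
    fun _ _ => Finset.mem_univ _]
  refine Finset.sum_congr rfl fun x _ => ?_
  rw [← ncard_isNormalForm hm]
  congr 1
  ext π
  refine and_congr_right fun hπ => ⟨?_, fun ⟨g', hg'⟩ => ?_⟩
  · rintro rfl
    exact hnf π hπ
  · obtain ⟨g, hg⟩ := hnf π hπ
    obtain ⟨hρ, hs, -⟩ := hg.unique hg' (hm π hπ)
    exact Prod.ext hρ hs

lemma eventuallyPolynomial_ncard_blockCount_eq (hC : IsPermClass C) (m : ℕ) :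
    EventuallyPolynomial fun n => {π | π ∈ C n ∧ blockCount π = m}.ncard :=
  (EventuallyPolynomial.sum Finset.univ fun (x : Equiv.Perm (Fin m) × (Fin m → Bool)) _ =>
    (isTruncationInvariant_normalFormLengths hC x.1 x.2).eventuallyPolynomial).congr <|
      .of_forall fun _ => (ncard_eq_sum_ncard_normalFormLengths (m := m)
        (C := fun n => {π | π ∈ C n ∧ blockCount π = m}) fun _ hπ => hπ.2).symm

lemma eventuallyPolynomial_ncard_of_blockCount_le {t : ℕ} (hC : IsPermClass C)
    (ht : ∀ n, ∀ π ∈ C n, blockCount π ≤ t) : EventuallyPolynomial fun n => (C n).ncard :=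
  (EventuallyPolynomial.sum (Finset.range (t + 1))
    fun m _ => eventuallyPolynomial_ncard_blockCount_eq hC m).congr <| .of_forall fun n =>
      (ncard_eq_sum_ncard_fiber (toFinite (C n)) blockCount _ fun π hπ =>
        Finset.mem_range_succ_iff.2 (ht n π hπ)).symm

end Counting

/-- **Theorem.** If a permutation class lies in the grid class of a matching (a matrix whose
bipartite graph has maximum degree 1), then it has eventually polynomial enumeration. -/
theorem matching_grid_polynomial (t u : ℕ) (M : Fin t → Fin u → SignType)
    (hmatch : IsMatchingMat M)
    (C : ∀ n : ℕ, Set (Equiv.Perm (Fin n))) (hC : IsPermClass C)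
    (hsub : ∀ n : ℕ, ∀ π ∈ C n, InGrid M π) :
    ∃ (p : Polynomial ℚ) (N : ℕ), ∀ n : ℕ, N ≤ n →
      (Nat.card (C n) : ℚ) = p.eval (n : ℚ) := by
  obtain ⟨p, hp⟩ := eventuallyPolynomial_ncard_of_blockCount_le hC
    fun n π hπ => (hsub n π hπ).blockCount_le hmatch
  exact ⟨p, eventually_atTop.1 hp⟩
end

section
/- Every sub-Fibonacci permutation class is griddable; equivalently, if a permutation class C satisfies |C_n| < F_n for some n (where F_n is the nth Fibonacci number with F_1 = F_2 = 1), then C is contained in Grid(M) for some matrix M with entries in {0, 1, −1}. -/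
/-!
A class with `|C N| < fib (N + 1)` cannot contain all direct sums of `1`s and `21`s of length `N`,
since there are `fib (N + 1)` of them: such a sum is determined by its descents, which form an
arbitrary set without consecutive elements. All of them embed in the direct sum of `N` copies of
`21`, so no permutation of the class contains that sum nor, symmetrically, the skew sum of `N`
copies of `12`.

Boundedly many cuts then slice every permutation of the class into monotone pieces (Huczynska and
Vatter). Sweep a vertical line to the right until some horizontal line has non-monotone pieces on
both sides, to its left. What lies strictly to the left of the vertical line needs a single
horizontal cut. To its right, the direct sums of `21`s in the upper quadrant are shorter than the
longest one overall, because a descent in the lower left quadrant extends each of them, and so are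
the skew sums of `12`s in the lower quadrant; both quadrants are sliced by induction. Finally one
matrix serves all permutations, since only finitely many columns of signs are possible and the
matrix may repeat all of them.
-/

section Slicing

open Finset OrderDual

variable {α β : Type*} [LinearOrder α] [LinearOrder β] {f : α → β} {s t : Set α}

/-- The points of the graph of `f` above `s` form a monotone sequence, in either direction. -/
def MonotoneOrAntitoneOn (f : α → β) (s : Set α) : Prop :=
  MonotoneOn f s ∨ AntitoneOn f s

theorem MonotoneOrAntitoneOn.mono (h : MonotoneOrAntitoneOn f t) (hst : s ⊆ t) :
    MonotoneOrAntitoneOn f s :=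
  h.imp (·.mono hst) (·.mono hst)

theorem monotoneOrAntitoneOn_of_subsingleton_image (h : (f '' s).Subsingleton) :
    MonotoneOrAntitoneOn f s :=
  .inl fun _ hi _ hj _ ↦ (h (Set.mem_image_of_mem f hi) (Set.mem_image_of_mem f hj)).le

theorem exists_descent_of_not_monotoneOrAntitoneOn (h : ¬ MonotoneOrAntitoneOn f s) :
    ∃ i ∈ s, ∃ j ∈ s, i < j ∧ f j < f i := by
  by_contra! hs
  exact h (.inl (monotoneOn_iff_forall_lt.2 hs))

theorem monotoneOrAntitoneOn_toDual_comp :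
    MonotoneOrAntitoneOn (toDual ∘ f) s ↔ MonotoneOrAntitoneOn f s :=
  or_comm

/-- No two distinct points of `s` are separated by a cut: `c ∈ X` separates `i < j` when
`i ≤ c ≤ j`, so the points lying on a cut are also separated from all others. -/
def Uncut (X : Finset α) (s : Set α) : Prop :=
  ∀ i ∈ s, ∀ j ∈ s, i < j → ∀ c ∈ X, c ∉ Set.Icc i j

theorem Uncut.anti {X X' : Finset α} (h : Uncut X' t) (hX : X ⊆ X') (hst : s ⊆ t) : Uncut X s :=
  fun i hi j hj hij c hc ↦ h i (hst hi) j (hst hj) hij c (hX hc)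

theorem Uncut.subsingleton_or_lt_or_gt {X : Finset α} (h : Uncut X s) {c : α} (hc : c ∈ X) :
    s.Subsingleton ∨ (∀ i ∈ s, i < c) ∨ ∀ i ∈ s, c < i := by
  by_contra! ⟨hs, ⟨j, hj, hcj⟩, i, hi, hic⟩
  rcases (hic.trans hcj).lt_or_eq with hij | rfl
  · exact h i hi j hj hij c hc ⟨hic, hcj⟩
  obtain rfl := hic.antisymm hcj
  obtain ⟨k, hk, hki⟩ := hs.exists_ne i
  rcases hki.lt_or_gt with hlt | hlt
  · exact h k hk i hi hlt i hc ⟨hlt.le, le_rfl⟩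
  · exact h i hi k hk hlt i hc ⟨le_rfl, hlt.le⟩

/-- The vertical cuts `X` and the horizontal cuts `Y` slice the graph of `f` above `s` into
monotone pieces. -/
def Slices (f : α → β) (X : Finset α) (Y : Finset β) (s : Set α) : Prop :=
  ∀ t ⊆ s, Uncut X t → Uncut Y (f '' t) → MonotoneOrAntitoneOn f t

variable {X X' : Finset α} {Y Y' : Finset β}

theorem MonotoneOrAntitoneOn.slices (h : MonotoneOrAntitoneOn f s) : Slices f X Y s :=
  fun _ hts _ _ ↦ h.mono hts

theorem Slices.mono (h : Slices f X Y t) (hst : s ⊆ t) (hX : X ⊆ X') (hY : Y ⊆ Y') :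
    Slices f X' Y' s :=
  fun r hrs hrX hrY ↦ h r (hrs.trans hst) (hrX.anti hX subset_rfl) (hrY.anti hY subset_rfl)

theorem slices_of_vertical_cut {m : α} (hm : m ∈ X) (hlt : Slices f X Y {i ∈ s | i < m})
    (hgt : Slices f X Y {i ∈ s | m < i}) : Slices f X Y s := by
  intro t hts htX htY
  rcases htX.subsingleton_or_lt_or_gt hm with ht | ht | ht
  · exact monotoneOrAntitoneOn_of_subsingleton_image (ht.image f)
  · exact hlt t (fun i hi ↦ ⟨hts hi, ht i hi⟩) htX htY
  · exact hgt t (fun i hi ↦ ⟨hts hi, ht i hi⟩) htX htY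

theorem slices_of_horizontal_cut {l : β} (hl : l ∈ Y) (hlt : Slices f X Y {i ∈ s | f i < l})
    (hgt : Slices f X Y {i ∈ s | l < f i}) : Slices f X Y s := by
  intro t hts htX htY
  rcases htY.subsingleton_or_lt_or_gt hl with ht | ht | ht
  · exact monotoneOrAntitoneOn_of_subsingleton_image ht
  · exact hlt t (fun i hi ↦ ⟨hts hi, ht _ (Set.mem_image_of_mem f hi)⟩) htX htY
  · exact hgt t (fun i hi ↦ ⟨hts hi, ht _ (Set.mem_image_of_mem f hi)⟩) htX htY

theorem Slices.combine {m : α} {l : β} {X₁ X₂ : Finset α} {Y₀ Y₁ Y₂ : Finset β}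
    (hleft : Slices f ∅ Y₀ {i ∈ s | i < m})
    (hupper : Slices f X₁ Y₁ {i ∈ s | m < i ∧ l < f i})
    (hlower : Slices f X₂ Y₂ {i ∈ s | m < i ∧ f i < l}) :
    Slices f (insert m (X₁ ∪ X₂)) (insert l (Y₀ ∪ (Y₁ ∪ Y₂))) s := by
  refine slices_of_vertical_cut (mem_insert_self _ _)
    (hleft.mono subset_rfl (empty_subset _) ?_)
    (slices_of_horizontal_cut (mem_insert_self _ _)
      (hlower.mono (fun i hi ↦ ⟨hi.1.1, hi.1.2, hi.2⟩) ?_ ?_)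
      (hupper.mono (fun i hi ↦ ⟨hi.1.1, hi.1.2, hi.2⟩) ?_ ?_))
  all_goals grind

theorem exists_threshold {ι γ : Type*} [LinearOrder γ] {p : Set ι → Prop} (h_empty : p ∅)
    (g : ι → γ) {s : Set ι} (hs : s.Finite) (h : ¬ p s) :
    ∃ m ∈ s, ¬ p {i ∈ s | g i ≤ g m} ∧ p {i ∈ s | g i < g m} := by
  have below_max {t : Set ι} (ht : t.Finite) (hpt : ¬ p t) : ∃ m ∈ t, ∀ i ∈ t, g i ≤ g m := by
    refine Set.exists_max_image t g ht (Set.nonempty_iff_ne_empty.2 ?_)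
    rintro rfl
    exact hpt h_empty
  obtain ⟨k, hk, hk_max⟩ := below_max hs h
  obtain ⟨m, ⟨hm, hpm⟩, hm_min⟩ :=
    Set.exists_min_image {m ∈ s | ¬ p {i ∈ s | g i ≤ g m}} g (hs.subset (Set.sep_subset _ _))
      ⟨k, hk, by rwa [Set.sep_eq_self_iff_mem_true.2 hk_max]⟩
  refine ⟨m, hm, hpm, ?_⟩
  by_contra hlt
  obtain ⟨k, ⟨hk, hkm⟩, hk_max⟩ := below_max (hs.subset (Set.sep_subset _ _)) hlt
  have hset : {i ∈ s | g i < g m} = {i ∈ s | g i ≤ g k} :=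
    Set.ext fun i ↦ ⟨fun hi ↦ ⟨hi.1, hk_max i hi⟩, fun hi ↦ ⟨hi.1, hi.2.trans_lt hkm⟩⟩
  exact hkm.not_ge (hm_min k ⟨hk, hset ▸ hlt⟩)

/-- No horizontal line has non-monotone pieces of the graph of `f` above `s` on both sides. -/
def Unstacked (f : α → β) (s : Set α) : Prop :=
  ∀ l, MonotoneOrAntitoneOn f {i ∈ s | f i ≤ l} ∨ MonotoneOrAntitoneOn f {i ∈ s | l < f i}

theorem unstacked_empty : Unstacked f ∅ :=
  fun _ ↦ .inl (.inl fun _ hi ↦ hi.1.elim)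

theorem Unstacked.exists_slices (h : Unstacked f s) (hs : s.Finite) :
    ∃ Y : Finset β, #Y ≤ 1 ∧ Slices f ∅ Y s := by
  by_cases hf : MonotoneOrAntitoneOn f s
  · exact ⟨∅, by simp, hf.slices⟩
  obtain ⟨m, -, hle, hlt⟩ := exists_threshold (.inl (Set.subsingleton_empty.monotoneOn f)) f hs hf
  exact ⟨{f m}, by simp, slices_of_horizontal_cut (mem_singleton_self _) hlt.slices
    ((h (f m)).resolve_left hle).slices⟩

theorem exists_corner_of_not_unstacked (h : ¬ Unstacked f s) (hs : s.Finite) :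
    ∃ (m : α) (l : β) (Y : Finset β), #Y ≤ 1 ∧ Slices f ∅ Y {i ∈ s | i < m} ∧
      ¬ MonotoneOrAntitoneOn f {i ∈ s | i ≤ m ∧ f i ≤ l} ∧
      ¬ MonotoneOrAntitoneOn f {i ∈ s | i ≤ m ∧ l < f i} := by
  obtain ⟨m, -, hle, hlt⟩ := exists_threshold unstacked_empty id hs h
  obtain ⟨Y, hY, hleft⟩ := hlt.exists_slices (hs.subset (Set.sep_subset _ _))
  simp only [Unstacked, not_forall, not_or, Set.mem_ofPred_eq, and_assoc] at hle
  obtain ⟨l, hbelow, habove⟩ := hle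
  exact ⟨m, l, Y, hY, hleft, hbelow, habove⟩

/-- The pairs `(x p, y p)` form the direct sum of `a` copies of the pattern `21` in `f`: each is a
descent of `f`, and each lies above and to the right of the preceding ones. Read in `toDual ∘ f`,
they form the skew sum of `a` copies of `12`. -/
structure IsDescentSum {a : ℕ} (f : α → β) (x y : Fin a → α) : Prop where
  lt (p : Fin a) : x p < y p
  map_lt (p : Fin a) : f (y p) < f (x p)
  lt_of_lt {p q : Fin a} (hpq : p < q) : y p < x q
  map_lt_of_lt {p q : Fin a} (hpq : p < q) : f (x p) < f (y q)

/-- The direct sum of `a` copies of `21` occurs in `f` above `s`. -/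
def HasDescentSum (f : α → β) (s : Set α) (a : ℕ) : Prop :=
  ∃ x y : Fin a → α, IsDescentSum f x y ∧ ∀ p, x p ∈ s ∧ y p ∈ s

theorem hasDescentSum_zero : HasDescentSum f s 0 :=
  ⟨Fin.elim0, Fin.elim0, ⟨fun p ↦ p.elim0, fun p ↦ p.elim0, fun {p} ↦ p.elim0, fun {p} ↦ p.elim0⟩,
    fun p ↦ p.elim0⟩

theorem HasDescentSum.mono {a : ℕ} (h : HasDescentSum f s a) (hst : s ⊆ t) :
    HasDescentSum f t a :=
  let ⟨x, y, hxy, hmem⟩ := h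
  ⟨x, y, hxy, fun p ↦ (hmem p).imp (hst ·) (hst ·)⟩

theorem HasDescentSum.cons {a : ℕ} (h : HasDescentSum f t a) (hts : t ⊆ s) {i j : α} (hi : i ∈ s)
    (hj : j ∈ s) (hij : i < j) (hf : f j < f i) (ht : ∀ k ∈ t, j < k ∧ f i < f k) :
    HasDescentSum f s (a + 1) := by
  obtain ⟨x, y, hxy, hmem⟩ := h
  refine ⟨Fin.cons i x, Fin.cons j y, ⟨Fin.cases hij hxy.lt, Fin.cases hf hxy.map_lt, ?_, ?_⟩,
    Fin.cases ⟨hi, hj⟩ fun p ↦ ⟨hts (hmem p).1, hts (hmem p).2⟩⟩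
  all_goals
    intro p q hpq
    obtain ⟨q, rfl⟩ := Fin.exists_succ_eq.2 hpq.ne_bot
    cases p using Fin.cases with
    | zero => first | exact (ht _ (hmem q).1).1 | exact (ht _ (hmem q).2).2
    | succ p =>
      have hpq := Fin.succ_lt_succ_iff.1 hpq
      first | exact hxy.lt_of_lt hpq | exact hxy.map_lt_of_lt hpq

theorem HasDescentSum.succ_of_upper_right {a : ℕ} {m : α} {l : β}
    (h : HasDescentSum f {i ∈ s | m < i ∧ l < f i} a)
    (hbelow : ¬ MonotoneOrAntitoneOn f {i ∈ s | i ≤ m ∧ f i ≤ l}) :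
    HasDescentSum f s (a + 1) := by
  obtain ⟨i, ⟨hi, -, hil⟩, j, ⟨hj, hjm, -⟩, hij, hf⟩ :=
    exists_descent_of_not_monotoneOrAntitoneOn hbelow
  exact h.cons (Set.sep_subset _ _) hi hj hij hf fun k hk ↦
    ⟨hjm.trans_lt hk.2.1, hil.trans_lt hk.2.2⟩

theorem HasDescentSum.succ_of_lower_right {a : ℕ} {m : α} {l : β}
    (h : HasDescentSum (toDual ∘ f) {i ∈ s | m < i ∧ f i < l} a)
    (habove : ¬ MonotoneOrAntitoneOn f {i ∈ s | i ≤ m ∧ l < f i}) :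
    HasDescentSum (toDual ∘ f) s (a + 1) :=
  h.succ_of_upper_right (l := toDual l) fun hmono ↦ habove <|
    (monotoneOrAntitoneOn_toDual_comp.1 hmono).mono fun _ hi ↦ ⟨hi.1, hi.2.1, hi.2.2.le⟩

theorem exists_slices_of_not_hasDescentSum (f : α → β) (a b : ℕ) {s : Set α} (hs : s.Finite)
    (ha : ¬ HasDescentSum f s a) (hb : ¬ HasDescentSum (toDual ∘ f) s b) :
    ∃ (X : Finset α) (Y : Finset β), #X + 2 ≤ 2 ^ (a + b) ∧ #Y + 2 ≤ 2 ^ (a + b) ∧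
      Slices f X Y s := by
  induction a generalizing b s with
  | zero => exact absurd hasDescentSum_zero ha
  | succ a ih_sum =>
  induction b generalizing s with
  | zero => exact absurd hasDescentSum_zero hb
  | succ b ih_skew =>
  -- The summand `2` in the bounds pays for the cuts `m`, `l` and `Y₀` added at each step.
  have hpow : 2 ^ (a + 1 + (b + 1)) = 2 ^ (a + (b + 1)) + 2 ^ (a + 1 + b) := by ring
  by_cases hst : Unstacked f s
  · obtain ⟨Y, hY, hslices⟩ := hst.exists_slices hs
    have hle_left : 2 ≤ 2 ^ (a + (b + 1)) := Nat.le_self_pow (by omega) 2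
    have hle_right : 2 ≤ 2 ^ (a + 1 + b) := Nat.le_self_pow (by omega) 2
    exact ⟨∅, Y, by rw [card_empty]; omega, by omega, hslices⟩
  obtain ⟨m, l, Y₀, hY₀, hleft, hbelow, habove⟩ := exists_corner_of_not_unstacked hst hs
  have hupper : {i ∈ s | m < i ∧ l < f i} ⊆ s := Set.sep_subset _ _
  have hlower : {i ∈ s | m < i ∧ f i < l} ⊆ s := Set.sep_subset _ _
  obtain ⟨X₁, Y₁, hX₁, hY₁, hslices₁⟩ := ih_sum (b + 1) (hs.subset hupper)
    (fun h ↦ ha (h.succ_of_upper_right hbelow)) (fun h ↦ hb (h.mono hupper))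
  obtain ⟨X₂, Y₂, hX₂, hY₂, hslices₂⟩ := ih_skew (hs.subset hlower)
    (fun h ↦ ha (h.mono hlower)) (fun h ↦ hb (h.succ_of_lower_right habove))
  refine ⟨insert m (X₁ ∪ X₂), insert l (Y₀ ∪ (Y₁ ∪ Y₂)), ?_, ?_, hleft.combine hslices₁ hslices₂⟩
  · have := card_insert_le m (X₁ ∪ X₂)
    have := card_union_le X₁ X₂
    omega
  · have := card_insert_le l (Y₀ ∪ (Y₁ ∪ Y₂))
    have := card_union_le Y₀ (Y₁ ∪ Y₂)
    have := card_union_le Y₁ Y₂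
    omega

end Slicing

section Gridding

open Finset OrderDual

theorem exists_monotone_uncut_fibers {α : Type*} [LinearOrder α] (X : Finset α) {K : ℕ}
    (hX : #X ≤ K) :
    ∃ A : α → Fin (2 * K + 1), Monotone A ∧ ∀ k, Uncut X {i | A i = k} := by
  let label (i : α) : ℕ := #{c ∈ X | c < i} + #{c ∈ X | c ≤ i}
  have label_lt (i : α) : label i < 2 * K + 1 := by
    have := card_filter_le X (· < i)
    have := card_filter_le X (· ≤ i)
    grind
  have lt_subset {i j : α} (hij : i ≤ j) : {c ∈ X | c < i} ⊆ {c ∈ X | c < j} :=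
    monotone_filter_right X fun c _ hc ↦ hc.trans_le hij
  have le_subset {i j : α} (hij : i ≤ j) : {c ∈ X | c ≤ i} ⊆ {c ∈ X | c ≤ j} :=
    monotone_filter_right X fun c _ hc ↦ hc.trans hij
  refine ⟨fun i ↦ ⟨label i, label_lt i⟩, fun i j hij ↦ Fin.mk_le_mk.2
    (Nat.add_le_add (card_le_card (lt_subset hij)) (card_le_card (le_subset hij))), ?_⟩
  rintro k i hi j hj hij c hc ⟨hic, hcj⟩
  have hlabel : label i = label j := Fin.mk_eq_mk.1 (hi.trans hj.symm)
  refine hlabel.not_lt ?_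
  rcases hcj.lt_or_eq with hcj | rfl
  · refine Nat.add_lt_add_of_lt_of_le (card_lt_card ⟨lt_subset hij.le, fun h ↦ ?_⟩)
      (card_le_card (le_subset hij.le))
    exact hic.not_gt (mem_filter.1 (h (mem_filter.2 ⟨hc, hcj⟩))).2
  · refine Nat.add_lt_add_of_le_of_lt (card_le_card (lt_subset hij.le))
      (card_lt_card ⟨le_subset hij.le, fun h ↦ ?_⟩)
    exact hij.not_ge (mem_filter.1 (h (mem_filter.2 ⟨hc, le_rfl⟩))).2

/-- The condition that a matrix entry `ε` puts on the part of the graph of `f` above `s`. -/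
structure FollowsSign {α β : Type*} [Preorder α] [Preorder β] (ε : SignType) (f : α → β)
    (s : Set α) : Prop where
  strictMonoOn : ε = 1 → StrictMonoOn f s
  strictAntiOn : ε = -1 → StrictAntiOn f s
  eq_empty : ε = 0 → s = ∅

theorem followsSign_empty {α β : Type*} [Preorder α] [Preorder β] (ε : SignType) (f : α → β) :
    FollowsSign ε f ∅ :=
  ⟨fun _ ↦ Set.subsingleton_empty.strictMonoOn f, fun _ ↦ Set.subsingleton_empty.strictAntiOn f,
    fun _ ↦ rfl⟩

theorem MonotoneOrAntitoneOn.exists_followsSign {α β : Type*} [LinearOrder α] [LinearOrder β]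
    {f : α → β} {s : Set α} (h : MonotoneOrAntitoneOn f s) (hf : f.Injective) :
    ∃ ε, FollowsSign ε f s := by
  rcases h with h | h
  · exact ⟨1, fun _ ↦ h.strictMonoOn_of_injOn hf.injOn,
      (absurd · (by decide)), (absurd · (by decide))⟩
  · exact ⟨-1, (absurd · (by decide)), fun _ ↦ h.strictAntiOn_of_injOn hf.injOn,
      (absurd · (by decide))⟩

variable {n t u : ℕ} {M : Fin t → Fin u → SignType} {π : Equiv.Perm (Fin n)} {A : Fin n → Fin t}
  {B : Fin n → Fin u}

/-- An `M`-gridding of `π`, encoded by the column `A i` of each position `i` and the row `B v` of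
each value `v`. -/
structure IsCellLabelling (M : Fin t → Fin u → SignType) (π : Equiv.Perm (Fin n))
    (A : Fin n → Fin t) (B : Fin n → Fin u) : Prop where
  monotone_column : Monotone A
  monotone_row : Monotone B
  followsSign (k : Fin t) (l : Fin u) : FollowsSign (M k l) π {i | A i = k ∧ B (π i) = l}

/-- The cuts between the fibers of `A`: column `k` begins at the number of points whose label is
less than `k`. -/
def fiberCuts (A : Fin n → Fin t) (k : Fin (t + 1)) : ℕ :=
  #{i | (A i).castSucc < k}

theorem monotone_fiberCuts (A : Fin n → Fin t) : Monotone (fiberCuts A) :=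
  fun _ _ hkl ↦ card_le_card (monotone_filter_right _ fun _ _ h ↦ h.trans_le hkl)

theorem fiberCuts_zero (A : Fin n → Fin t) : fiberCuts A 0 = 0 := by
  simp [fiberCuts]

theorem fiberCuts_last (A : Fin n → Fin t) : fiberCuts A (Fin.last t) = n := by
  simp [fiberCuts, Fin.castSucc_lt_last]

theorem fiberCuts_le_and_lt_iff (hA : Monotone A) (i : Fin n) (k : Fin t) :
    fiberCuts A k.castSucc ≤ i ∧ (i : ℕ) < fiberCuts A k.succ ↔ A i = k := by
  have hA' : Monotone fun i ↦ (A i).castSucc := Fin.strictMono_castSucc.monotone.comp hA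
  rw [fiberCuts, fiberCuts, ← not_lt, Tuple.lt_card_lt_iff_apply_lt_of_monotone hA',
    Tuple.lt_card_lt_iff_apply_lt_of_monotone hA', Fin.castSucc_lt_castSucc_iff,
    Fin.castSucc_lt_succ_iff, not_lt, le_antisymm_iff, and_comm]

theorem IsCellLabelling.inGrid (h : IsCellLabelling M π A B) : InGrid M π := by
  have inBlock_iff (k : Fin t) (l : Fin u) (i : Fin n) :
      InBlock π (fiberCuts A) (fiberCuts B) k l i ↔ i ∈ {i | A i = k ∧ B (π i) = l} := by
    rw [InBlock, ← and_assoc, fiberCuts_le_and_lt_iff h.monotone_column,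
      fiberCuts_le_and_lt_iff h.monotone_row, Set.mem_ofPred_eq]
  refine ⟨fiberCuts A, fiberCuts B, monotone_fiberCuts A, monotone_fiberCuts B, fiberCuts_zero A,
    fiberCuts_last A, fiberCuts_zero B, fiberCuts_last B, fun k l ↦ ?_⟩
  simp only [inBlock_iff]
  exact ⟨fun hM i j hi hj hij ↦ (h.followsSign k l).strictMonoOn hM hi hj hij,
    fun hM i j hi hj hij ↦ (h.followsSign k l).strictAntiOn hM hi hj hij,
    fun hM ↦ Set.eq_empty_iff_forall_notMem.1 ((h.followsSign k l).eq_empty hM)⟩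

theorem exists_isCellLabelling (hA : Monotone A) (hB : Monotone B)
    (h : ∀ k l, MonotoneOrAntitoneOn π {i | A i = k ∧ B (π i) = l}) :
    ∃ M, IsCellLabelling M π A B := by
  choose M hM using fun k l ↦ (h k l).exists_followsSign π.injective
  exact ⟨M, hA, hB, hM⟩

theorem IsCellLabelling.column_comp (h : IsCellLabelling M π A B) {t' : ℕ}
    {M' : Fin t' → Fin u → SignType} {φ : Fin t → Fin t'} (hφ : StrictMono φ)
    (hM : ∀ k, M' (φ k) = M k) : IsCellLabelling M' π (φ ∘ A) B := by
  refine ⟨hφ.monotone.comp h.monotone_column, h.monotone_row, fun k' l ↦ ?_⟩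
  by_cases hk' : ∃ k, φ k = k'
  · obtain ⟨k, rfl⟩ := hk'
    simpa only [Function.comp_apply, hφ.injective.eq_iff, hM] using h.followsSign k l
  · have hempty : {i | (φ ∘ A) i = k' ∧ B (π i) = l} = ∅ :=
      Set.eq_empty_of_forall_notMem fun i hi ↦ hk' ⟨A i, hi.1⟩
    exact hempty ▸ followsSign_empty _ _

theorem exists_universal_matrix (t u : ℕ) :
    ∃ (t' : ℕ) (M' : Fin t' → Fin u → SignType), ∀ M : Fin t → Fin u → SignType,
      ∃ φ : Fin t → Fin t', StrictMono φ ∧ ∀ k, M' (φ k) = M k := by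
  obtain ⟨N, ⟨e⟩⟩ := Finite.exists_equiv_fin (Fin u → SignType)
  refine ⟨t * N, fun k' ↦ e.symm (finProdFinEquiv.symm k').2, fun M ↦
    ⟨fun k ↦ finProdFinEquiv (k, e (M k)), fun k l hkl ↦ ?_, fun k ↦ by simp⟩⟩
  simp only [Fin.lt_def, finProdFinEquiv_apply_val] at hkl ⊢
  calc (e (M k) : ℕ) + N * k < N + N * k := Nat.add_lt_add_right (e (M k)).isLt _
    _ = N * (k + 1) := by ring
    _ ≤ N * l := Nat.mul_le_mul_left _ hkl
    _ ≤ e (M l) + N * l := Nat.le_add_left _ _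

/-- The griddability theorem of Huczynska and Vatter. -/
theorem exists_matrix_of_not_hasDescentSum (a b : ℕ) :
    ∃ (t u : ℕ) (M : Fin t → Fin u → SignType), ∀ (n : ℕ) (π : Equiv.Perm (Fin n)),
      ¬ HasDescentSum π Set.univ a → ¬ HasDescentSum (toDual ∘ π) Set.univ b → InGrid M π := by
  obtain ⟨t, M, hM⟩ := exists_universal_matrix (2 * 2 ^ (a + b) + 1) (2 * 2 ^ (a + b) + 1)
  refine ⟨t, _, M, fun n π ha hb ↦ ?_⟩
  obtain ⟨X, Y, hX, hY, hslices⟩ := exists_slices_of_not_hasDescentSum π a b Set.finite_univ ha hb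
  obtain ⟨A, hA, hAX⟩ := exists_monotone_uncut_fibers X (Nat.le_of_add_right_le hX)
  obtain ⟨B, hB, hBY⟩ := exists_monotone_uncut_fibers Y (Nat.le_of_add_right_le hY)
  obtain ⟨M₀, hM₀⟩ := exists_isCellLabelling (π := π) hA hB fun k l ↦
    hslices _ (Set.subset_univ _) ((hAX k).anti subset_rfl fun _ hi ↦ hi.1)
      ((hBY l).anti subset_rfl (Set.image_subset_iff.2 fun _ hi ↦ hi.2))
  obtain ⟨φ, hφ, hMφ⟩ := hM M₀
  exact (hM₀.column_comp hφ hMφ).inGrid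

end Gridding

section Counting

open Finset OrderDual

/-- `S` consists of positions in `{1, …, N - 1}`, no two of them consecutive. -/
structure IsSparse (N : ℕ) (S : Finset ℕ) : Prop where
  pos {j : ℕ} (hj : j ∈ S) : 0 < j
  lt {j : ℕ} (hj : j ∈ S) : j < N
  succ_notMem {j : ℕ} (hj : j ∈ S) : j + 1 ∉ S

theorem IsSparse.succ {N : ℕ} {S : Finset ℕ} (h : IsSparse N S) : IsSparse (N + 1) S :=
  ⟨h.pos, fun hj ↦ (h.lt hj).trans N.lt_succ_self, h.succ_notMem⟩

theorem IsSparse.insert {N : ℕ} {S : Finset ℕ} (h : IsSparse N S) :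
    IsSparse (N + 2) (insert (N + 1) S) := by
  obtain ⟨hpos, hlt, hsucc⟩ := h
  refine ⟨?_, ?_, ?_⟩ <;> grind

theorem exists_fib_isSparse (N : ℕ) :
    ∃ F : Finset (Finset ℕ), #F = Nat.fib (N + 1) ∧ ∀ S ∈ F, IsSparse N S := by
  have isSparse_empty (N : ℕ) : ∀ S ∈ ({∅} : Finset (Finset ℕ)), IsSparse N S := by
    rintro _ hS
    obtain rfl := mem_singleton.1 hS
    exact ⟨by simp, by simp, by simp⟩
  induction N using Nat.twoStepInduction with
  | zero => exact ⟨{∅}, rfl, isSparse_empty 0⟩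
  | one => exact ⟨{∅}, rfl, isSparse_empty 1⟩
  | more N ih_zero ih_one =>
    obtain ⟨F₀, hcard₀, hF₀⟩ := ih_zero
    obtain ⟨F₁, hcard₁, hF₁⟩ := ih_one
    have notMem₀ : ∀ S ∈ F₀, N + 1 ∉ S := fun S hS h ↦ absurd ((hF₀ S hS).lt h) (by omega)
    have notMem₁ : ∀ S ∈ F₁, N + 1 ∉ S := fun S hS h ↦ absurd ((hF₁ S hS).lt h) (by omega)
    have hinj : Set.InjOn (insert (N + 1)) (F₀ : Set (Finset ℕ)) := fun S hS T hT hST ↦ by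
      rw [← erase_insert (notMem₀ S hS), hST, erase_insert (notMem₀ T hT)]
    have hdisj : Disjoint (F₀.image (insert (N + 1))) F₁ := by
      refine disjoint_left.2 fun S hS hS₁ ↦ notMem₁ S hS₁ ?_
      obtain ⟨T, -, rfl⟩ := mem_image.1 hS
      exact mem_insert_self _ _
    refine ⟨F₀.image (insert (N + 1)) ∪ F₁, ?_, fun S hS ↦ ?_⟩
    · rw [card_union_of_disjoint hdisj, card_image_of_injOn hinj, hcard₀, hcard₁,
        ← Nat.fib_add_two]
    · rcases mem_union.1 hS with hS | hS
      · obtain ⟨T, hT, rfl⟩ := mem_image.1 hS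
        exact (hF₀ T hT).insert
      · exact (hF₁ S hS).succ

variable {α β : Type*} [LinearOrder α] [LinearOrder β] {f : α → β} {N : ℕ} {x y : Fin N → α}

theorem IsDescentSum.left_lt_right (h : IsDescentSum f x y) {p q : Fin N} (hpq : p ≤ q) :
    x p < y q := by
  rcases hpq.lt_or_eq with hpq | rfl
  · exact (h.lt p).trans ((h.lt_of_lt hpq).trans (h.lt q))
  · exact h.lt p

theorem IsDescentSum.map_left_lt_left (h : IsDescentSum f x y) {p q : Fin N} (hpq : p < q) :
    f (x p) < f (x q) :=
  (h.map_lt_of_lt hpq).trans (h.map_lt q)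

theorem IsDescentSum.map_right_lt_left (h : IsDescentSum f x y) {p q : Fin N} (hpq : p < q) :
    f (y p) < f (x q) :=
  (h.map_lt p).trans (h.map_left_lt_left hpq)

/-- One point at each place `j < N`, taken from a direct sum of `21`s: the second point of copy
`j - 1` if `j ∈ S`, the first point of copy `j` otherwise. For sparse `S` this is an occurrence of
a direct sum of `1`s and `21`s, in which the `21`s end at the places in `S`. -/
def selectPoints (x y : Fin N → α) (S : Finset ℕ) (j : Fin N) : α :=
  if (j : ℕ) ∈ S then y ⟨j - 1, by omega⟩ else x j

theorem IsDescentSum.strictMono_selectPoints (h : IsDescentSum f x y) {S : Finset ℕ}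
    (hS : IsSparse N S) : StrictMono (selectPoints x y S) := by
  intro i j hij
  unfold selectPoints
  split_ifs with hi hj hj
  · have := hS.pos hi
    exact (h.lt_of_lt (Fin.mk_lt_mk.2 (by omega))).trans (h.lt _)
  · exact h.lt_of_lt (Fin.lt_def.2 (by grind))
  · exact h.left_lt_right (Fin.le_def.2 (by grind))
  · exact (h.lt i).trans (h.lt_of_lt hij)

theorem IsDescentSum.mem_iff_descent (h : IsDescentSum f x y) {S : Finset ℕ} (hS : IsSparse N S)
    {k : ℕ} (hk : k + 1 < N) :
    k + 1 ∈ S ↔ f (selectPoints x y S ⟨k + 1, hk⟩) < f (selectPoints x y S ⟨k, by omega⟩) := by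
  unfold selectPoints
  by_cases hmem : k + 1 ∈ S
  · have hkS : k ∉ S := fun hkS ↦ hS.succ_notMem hkS hmem
    simpa [hmem, hkS] using h.map_lt _
  · refine iff_of_false hmem (lt_asymm ?_)
    rw [if_neg hmem]
    split_ifs
    · exact h.map_right_lt_left (Fin.mk_lt_mk.2 (by dsimp only; omega))
    · exact h.map_left_lt_left (Fin.mk_lt_mk.2 (by omega))

theorem IsDescentSum.eq_of_same_order (h : IsDescentSum f x y) {S T : Finset ℕ}
    (hS : IsSparse N S) (hT : IsSparse N T)
    (hST : ∀ i j, f (selectPoints x y S i) < f (selectPoints x y S j) ↔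
      f (selectPoints x y T i) < f (selectPoints x y T j)) : S = T := by
  have mem_iff {k : ℕ} (hk : k + 1 < N) : k + 1 ∈ S ↔ k + 1 ∈ T := by
    rw [h.mem_iff_descent hS hk, h.mem_iff_descent hT hk, hST]
  ext j
  by_cases hj : 0 < j ∧ j < N
  · obtain ⟨k, rfl⟩ := Nat.exists_eq_add_one.2 hj.1
    exact mem_iff hj.2
  · exact iff_of_false (fun h ↦ hj ⟨hS.pos h, hS.lt h⟩) fun h ↦ hj ⟨hT.pos h, hT.lt h⟩

theorem HasDescentSum.exists_fib_embeddings {s : Set α} (h : HasDescentSum f s N) :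
    ∃ g : Fin (Nat.fib (N + 1)) → Fin N → α, (∀ p, StrictMono (g p)) ∧
      ∀ p q, (∀ i j, f (g p i) < f (g p j) ↔ f (g q i) < f (g q j)) → p = q := by
  obtain ⟨x, y, hxy, -⟩ := h
  obtain ⟨F, hcard, hF⟩ := exists_fib_isSparse N
  let S := (F.equivFinOfCardEq hcard).symm
  have hS (p) : IsSparse N (S p) := hF _ (S p).2
  exact ⟨fun p ↦ selectPoints x y (S p), fun p ↦ hxy.strictMono_selectPoints (hS p),
    fun p q hpq ↦ S.injective (Subtype.ext (hxy.eq_of_same_order (hS p) (hS q) hpq))⟩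

theorem exists_perm_same_order {h : Fin N → α} (hh : h.Injective) :
    ∃ σ : Equiv.Perm (Fin N), ∀ i j, σ i < σ j ↔ h i < h j := by
  have hmono : StrictMono (h ∘ Tuple.sort h) :=
    (Tuple.monotone_sort h).strictMono_of_injective (hh.comp (Tuple.sort h).injective)
  exact ⟨(Tuple.sort h).symm, fun i j ↦ by rw [← hmono.lt_iff_lt]; simp⟩

theorem IsPermClass.card_le_card {C : ∀ n : ℕ, Set (Equiv.Perm (Fin n))} (hC : IsPermClass C)
    {n : ℕ} {π : Equiv.Perm (Fin n)} (hπ : π ∈ C n) {ι : Type*} (g : ι → Fin N → Fin n)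
    (hg : ∀ p, StrictMono (g p))
    (hinj : ∀ p q, (∀ i j, π (g p i) < π (g p j) ↔ π (g q i) < π (g q j)) → p = q) :
    Nat.card ι ≤ Nat.card (C N) := by
  choose σ hσ using fun p ↦ exists_perm_same_order (π.injective.comp (hg p).injective)
  have hmem (p : ι) : σ p ∈ C N := hC N n (σ p) π hπ ⟨g p, hg p, hσ p⟩
  refine Nat.card_le_card_of_injective (fun p ↦ (⟨σ p, hmem p⟩ : C N)) fun p q hpq ↦
    hinj p q fun i j ↦ ?_
  have hσpq : σ p = σ q := congrArg Subtype.val hpq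
  exact (hσ p i j).symm.trans (hσpq ▸ hσ q i j)

end Counting

theorem subFibonacci_griddable_general (C : ∀ n : ℕ, Set (Equiv.Perm (Fin n)))
    (hC : IsPermClass C) (hfib : ∃ n : ℕ, Nat.card (C n) < Nat.fib (n + 1)) :
    ∃ (t u : ℕ) (M : Fin t → Fin u → SignType), ∀ n : ℕ, ∀ π ∈ C n, InGrid M π := by
  obtain ⟨N, hN⟩ := hfib
  obtain ⟨t, u, M, hM⟩ := exists_matrix_of_not_hasDescentSum N N
  refine ⟨t, u, M, fun n π hπ ↦ hM n π (fun hsum ↦ hN.not_ge ?_) (fun hskew ↦ hN.not_ge ?_)⟩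
  · obtain ⟨g, hg, hinj⟩ := hsum.exists_fib_embeddings
    simpa only [Nat.card_fin] using hC.card_le_card hπ g hg hinj
  · obtain ⟨g, hg, hinj⟩ := hskew.exists_fib_embeddings
    simpa only [Nat.card_fin] using
      hC.card_le_card hπ g hg fun p q hpq ↦ hinj p q fun i j ↦ hpq j i

/-- **Proposition.** Every sub-Fibonacci permutation class (one with `|C_n| < F_n` for some
`n`, where `F_1 = F_2 = 1`) is griddable. -/
theorem subFibonacci_griddable (C : ∀ n : ℕ, Set (Equiv.Perm (Fin n))) (hC : IsPermClass C)
    (hfib : ∃ n : ℕ, Nat.card (C n) < Nat.fib n) :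
    ∃ (t u : ℕ) (M : Fin t → Fin u → SignType), ∀ n : ℕ, ∀ π ∈ C n, InGrid M π :=
  subFibonacci_griddable_general C hC (hfib.imp fun _ hn ↦ hn.trans_le Nat.fib_le_fib_succ)
end

section
/- A griddable permutation class C lies in Grid(M) for some matrix M with entries in {0, 1, −1} whose bipartite graph G(M) is a matching if and only if C does not contain arbitrarily long alternations (vertical or horizontal). -/
/-- A vertical alternation: a permutation of even length `n = 2m` such that either every
value in an odd position is smaller than every value in an even position, or vice versa
(positions here are 0-indexed, so "odd positions" are those with index `≡ 0 mod 2`). -/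
def IsVerticalAlternation {n : ℕ} (π : Equiv.Perm (Fin n)) : Prop :=
  (∃ m : ℕ, n = 2 * m) ∧
    ((∀ i j : Fin n, (i : ℕ) % 2 = 0 → (j : ℕ) % 2 = 1 → π i < π j) ∨
     (∀ i j : Fin n, (i : ℕ) % 2 = 0 → (j : ℕ) % 2 = 1 → π j < π i))

/-- The class `C` contains arbitrarily long alternations (vertical or horizontal, a
horizontal alternation being the inverse of a vertical one). -/
def ContainsArbitrarilyLongAlternations (C : ∀ n : ℕ, Set (Equiv.Perm (Fin n))) : Prop :=
  ∀ m : ℕ, ∃ (n : ℕ) (π : Equiv.Perm (Fin n)), π ∈ C n ∧ m ≤ n ∧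
    (IsVerticalAlternation π ∨ IsVerticalAlternation π⁻¹)

/-!
In a matching, each column meets one cell, so a permutation is monotone on it; but three points of
a vertical alternation in one column with alternating parities are not monotone, which bounds
the number of points by twice the number of columns.

Conversely, fix a gridding of `π`. Reading the points from left to right, each passage from one
given row to another contributes two entries of a vertical alternation, so the cell of the current
point changes boundedly often; the same holds from bottom to top. Cut the plane at all these
changes. Every new column and every new row lies inside a single old cell, hence is monotone.
Therefore a new row `b` meets a new column `a` in an interval of both, and these intervals occur
inside `a` in increasing or decreasing order of `b`. Cutting `a` once more between them, and `b`
likewise, leaves one cell in each line. Only boundedly many matrices arise, and they all embed in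
one matching.
-/

open Finset Order

section HasSignOn

variable {α β : Type*} [Preorder α] [Preorder β]

/-- The restriction of `φ` to `S` is a cell with matrix entry `s`: increasing if `s = 1`,
decreasing if `s = -1` and empty if `s = 0`. -/
def HasSignOn (φ : α → β) (s : SignType) (S : Set α) : Prop :=
  (s = 1 → StrictMonoOn φ S) ∧ (s = -1 → StrictAntiOn φ S) ∧ (s = 0 → S = ∅)

namespace HasSignOn

variable {φ : α → β} {s : SignType} {S T : Set α}

protected theorem empty : HasSignOn φ s ∅ :=
  ⟨fun _ => Set.subsingleton_empty.strictMonoOn φ, fun _ => Set.subsingleton_empty.strictAntiOn φ,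
    fun _ => rfl⟩

theorem mono (h : HasSignOn φ s T) (hST : S ⊆ T) : HasSignOn φ s S :=
  ⟨fun hs => (h.1 hs).mono hST, fun hs => (h.2.1 hs).mono hST,
    fun hs => Set.subset_eq_empty hST (h.2.2 hs)⟩

theorem strictMonoOn_or_strictAntiOn (h : HasSignOn φ s S) :
    StrictMonoOn φ S ∨ StrictAntiOn φ S := by
  obtain rfl | rfl | rfl := s.trichotomy
  · exact .inr (h.2.1 rfl)
  · exact .inl (h.2.2 rfl ▸ Set.subsingleton_empty.strictMonoOn φ)
  · exact .inl (h.1 rfl)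

theorem symm {α β : Type*} [LinearOrder α] [Preorder β] {S : Set α} {π : α ≃ β}
    (h : HasSignOn π s S) : HasSignOn π.symm s (π.symm ⁻¹' S) := by
  refine ⟨fun hs v hv w hw hvw => ?_, fun hs v hv w hw hvw => ?_, fun hs => by simp [h.2.2 hs]⟩
  · rwa [← (h.1 hs).lt_iff_lt hv hw, π.apply_symm_apply, π.apply_symm_apply]
  · rwa [← (h.2.1 hs).lt_iff_gt hv hw, π.apply_symm_apply, π.apply_symm_apply]

end HasSignOn

end HasSignOn

section IsGridLabelling

variable {α β κ ρ : Type*} [LinearOrder α] [LinearOrder β] [Preorder κ] [Preorder ρ]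

/-- A gridding by `M` encoded without cut points: `f` sends a position to its column and `g` sends
a value to its row. The columns and rows are indexed by arbitrary ordered types. -/
structure IsGridLabelling (M : κ → ρ → SignType) (π : α ≃ β) (f : α → κ) (g : β → ρ) : Prop where
  monotone_col : Monotone f
  monotone_row : Monotone g
  hasSignOn : ∀ k l, HasSignOn π (M k l) {i | f i = k ∧ g (π i) = l}

namespace IsGridLabelling

variable {M : κ → ρ → SignType} {π : α ≃ β} {f : α → κ} {g : β → ρ}

theorem ne_zero (h : IsGridLabelling M π f g) (i : α) : M (f i) (g (π i)) ≠ 0 := fun h0 =>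
  Set.eq_empty_iff_forall_notMem.1 ((h.hasSignOn _ _).2.2 h0) i ⟨rfl, rfl⟩

theorem symm (h : IsGridLabelling M π f g) : IsGridLabelling (fun l k => M k l) π.symm g f where
  monotone_col := h.monotone_row
  monotone_row := h.monotone_col
  hasSignOn l k := by simpa [and_comm] using (h.hasSignOn k l).symm

theorem strictMonoOn_or_strictAntiOn_col (h : IsGridLabelling M π f g)
    (hM : ∀ k l l', M k l ≠ 0 → M k l' ≠ 0 → l = l') (k : κ) :
    StrictMonoOn π {i | f i = k} ∨ StrictAntiOn π {i | f i = k} := by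
  obtain hempty | ⟨i, rfl⟩ := {i | f i = k}.eq_empty_or_nonempty
  · exact .inl (hempty ▸ Set.subsingleton_empty.strictMonoOn π)
  · refine ((h.hasSignOn (f i) (g (π i))).mono fun j hj => ⟨hj, ?_⟩).strictMonoOn_or_strictAntiOn
    exact hM (f i) _ _ (hj ▸ h.ne_zero j) (h.ne_zero i)

end IsGridLabelling

end IsGridLabelling

section Cuts

variable {n t u : ℕ}

/-- The cut points `c` divide the positions `0, …, n - 1` into the fibers of `f`. -/
structure IsCutSequence (c : Fin (t + 1) → ℕ) (f : Fin n → Fin t) : Prop where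
  monotone : Monotone c
  zero : c 0 = 0
  last : c (Fin.last t) = n
  eq_iff : ∀ i k, f i = k ↔ c k.castSucc ≤ i ∧ i < c k.succ

theorem exists_isCutSequence {f : Fin n → Fin t} (hf : Monotone f) : ∃ c, IsCutSequence c f := by
  have lt_cut (i : Fin n) (k : Fin (t + 1)) :
      i < #{j | (f j).castSucc < k} ↔ (f i).castSucc < k :=
    Tuple.lt_card_lt_iff_apply_lt_of_monotone (Fin.strictMono_castSucc.monotone.comp hf)
  refine ⟨fun k => #{j | (f j).castSucc < k}, ?_, by simp, by simp [Fin.castSucc_lt_last], ?_⟩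
  · exact fun k l hkl => card_le_card (monotone_filter_right _ fun _ _ hj => hj.trans_le hkl)
  · intro i k
    rw [← not_lt, lt_cut, lt_cut, Fin.castSucc_lt_castSucc_iff, Fin.castSucc_lt_succ_iff, not_lt,
      le_antisymm_iff, and_comm]

theorem exists_monotone_isCutSequence {c : Fin (t + 1) → ℕ} (hc : Monotone c) (h0 : c 0 = 0)
    (hn : c (Fin.last t) = n) : ∃ f : Fin n → Fin t, Monotone f ∧ IsCutSequence c f := by
  have exists_interval (i : Fin n) : ∃ k : Fin t, c k.castSucc ≤ i ∧ i < c k.succ := by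
    by_contra! hcut
    have hle (k : Fin (t + 1)) : c k ≤ i := by
      induction k using Fin.induction with
      | zero => omega
      | succ k ih => exact hcut k ih
    exact absurd (hle (Fin.last t)) (by omega)
  have interval_le {i j : Fin n} {k l : Fin t} (hij : i ≤ j) (hk : c k.castSucc ≤ i)
      (hl : j < c l.succ) : k ≤ l := by
    by_contra! hlk
    have : c l.succ ≤ c k.castSucc := hc (Fin.succ_le_castSucc_iff.2 hlk)
    omega
  choose f hf using exists_interval
  refine ⟨f, fun i j hij => interval_le hij (hf i).1 (hf j).2, hc, h0, hn, fun i k => ⟨?_, ?_⟩⟩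
  · rintro rfl
    exact hf i
  · exact fun hk => (interval_le le_rfl (hf i).1 hk.2).antisymm (interval_le le_rfl hk.1 (hf i).2)

variable {M : Fin t → Fin u → SignType} {π : Equiv.Perm (Fin n)}

theorem setOf_inBlock {c : Fin (t + 1) → ℕ} {r : Fin (u + 1) → ℕ} {f : Fin n → Fin t}
    {g : Fin n → Fin u} (hc : IsCutSequence c f) (hr : IsCutSequence r g) (k : Fin t) (l : Fin u) :
    {i | InBlock π c r k l i} = {i | f i = k ∧ g (π i) = l} := by
  ext i
  simp only [Set.mem_ofPred_eq, InBlock, hc.eq_iff, hr.eq_iff, and_assoc]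

theorem InGrid.exists_isGridLabelling (h : InGrid M π) : ∃ f g, IsGridLabelling M π f g := by
  obtain ⟨c, r, hc, hr, hc0, hcn, hr0, hrn, hblock⟩ := h
  obtain ⟨f, hf, hcf⟩ := exists_monotone_isCutSequence hc hc0 hcn
  obtain ⟨g, hg, hrg⟩ := exists_monotone_isCutSequence hr hr0 hrn
  refine ⟨f, g, hf, hg, fun k l => setOf_inBlock hcf hrg k l ▸ ?_⟩
  obtain ⟨hinc, hdec, hempty⟩ := hblock k l
  exact ⟨fun hM i hi j hj => hinc hM i j hi hj, fun hM i hi j hj => hdec hM i j hi hj,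
    fun hM => Set.eq_empty_iff_forall_notMem.2 (hempty hM)⟩

theorem IsGridLabelling.inGrid {κ ρ : Type*} [Preorder κ] [Preorder ρ]
    {M : κ → ρ → SignType} {f : Fin n → κ} {g : Fin n → ρ} (h : IsGridLabelling M π f g)
    (e : Fin t ≃o κ) (e' : Fin u ≃o ρ) : InGrid (fun k l => M (e k) (e' l)) π := by
  obtain ⟨c, hc⟩ := exists_isCutSequence (e.symm.monotone.comp h.monotone_col)
  obtain ⟨r, hr⟩ := exists_isCutSequence (e'.symm.monotone.comp h.monotone_row)
  refine ⟨c, r, hc.monotone, hr.monotone, hc.zero, hc.last, hr.zero, hr.last, fun k l => ?_⟩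
  have hcell : HasSignOn π (M (e k) (e' l)) {i | InBlock π c r k l i} := by
    simpa [setOf_inBlock hc hr, OrderIso.symm_apply_eq] using h.hasSignOn (e k) (e' l)
  exact ⟨fun hM i j hi hj => hcell.1 hM hi hj, fun hM i j hi hj => hcell.2.1 hM hi hj,
    fun hM => Set.eq_empty_iff_forall_notMem.1 (hcell.2.2 hM)⟩

end Cuts

section Alternations

theorem IsVerticalAlternation.length_le {n : ℕ} {κ ρ : Type*} [PartialOrder κ] [Preorder ρ]
    [Fintype κ] {M : κ → ρ → SignType} {π : Equiv.Perm (Fin n)} {f : Fin n → κ} {g : Fin n → ρ}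
    (hπ : IsVerticalAlternation π) (h : IsGridLabelling M π f g)
    (hM : ∀ k l l', M k l ≠ 0 → M k l' ≠ 0 → l = l') : n ≤ 2 * Fintype.card κ := by
  obtain ⟨⟨m, rfl⟩, halt⟩ := hπ
  by_contra! hlong
  obtain ⟨a, b, hab, hfab⟩ := Fintype.exists_ne_map_eq_of_card_lt
    (fun a : Fin m => f ⟨2 * a, by omega⟩) (by rw [Fintype.card_fin]; omega)
  wlog hlt : a < b generalizing a b
  · exact this b a hab.symm hfab.symm (hab.symm.lt_of_le (not_lt.1 hlt))
  let x : Fin (2 * m) := ⟨2 * a, by omega⟩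
  let y : Fin (2 * m) := ⟨2 * a + 1, by omega⟩
  let z : Fin (2 * m) := ⟨2 * b, by omega⟩
  have hxy : x < y := Fin.mk_lt_mk.2 (by omega)
  have hyz : y < z := Fin.mk_lt_mk.2 (by omega)
  have hfz : f z = f x := hfab.symm
  have hfy : f y = f x :=
    (hfz ▸ h.monotone_col hyz.le).antisymm (h.monotone_col hxy.le)
  have hpeak : (π x < π y ∧ π z < π y) ∨ (π y < π x ∧ π y < π z) := by
    have hx : (x : ℕ) % 2 = 0 := by simp [x]
    have hy : (y : ℕ) % 2 = 1 := by simp [y]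
    have hz : (z : ℕ) % 2 = 0 := by simp [z]
    exact halt.imp (fun hlt => ⟨hlt x y hx hy, hlt z y hz hy⟩)
      (fun hgt => ⟨hgt x y hx hy, hgt z y hz hy⟩)
  obtain hmono | hanti := h.strictMonoOn_or_strictAntiOn_col hM (f x)
  · have := hmono rfl hfy hxy
    have := hmono hfy hfz hyz
    omega
  · have := hanti rfl hfy hxy
    have := hanti hfy hfz hyz
    omega

theorem PermContains.inv {k n : ℕ} {σ : Equiv.Perm (Fin k)} {π : Equiv.Perm (Fin n)}
    (h : PermContains σ π) : PermContains σ⁻¹ π⁻¹ := by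
  obtain ⟨f, hf, h⟩ := h
  refine ⟨fun v => π (f (σ⁻¹ v)), fun v w hvw => ?_, fun i j => by simp [hf.lt_iff_lt]⟩
  simpa [← h] using hvw

theorem exists_perm_lt_iff_lt {k : ℕ} {α : Type*} [LinearOrder α] {p : Fin k → α}
    (hp : Function.Injective p) : ∃ σ : Equiv.Perm (Fin k), ∀ i j, σ i < σ j ↔ p i < p j := by
  have hsort : StrictMono (p ∘ Tuple.sort p) :=
    (Tuple.monotone_sort p).strictMono_of_injective (hp.comp (Tuple.sort p).injective)
  exact ⟨(Tuple.sort p).symm, fun i j => by simp [← hsort.lt_iff_lt]⟩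

theorem exists_strictMono_alternating {α γ : Type*} [LinearOrder α] [SuccOrder α] [Fintype α]
    [DecidableEq γ] {ψ : α → γ} {x y : γ} (hxy : x ≠ y) {m : ℕ}
    (hm : m ≤ #{i | ψ i = x ∧ ψ (succ i) = y}) :
    ∃ h : Fin (2 * m) → α, StrictMono h ∧ ∀ q, ψ (h q) = if (q : ℕ) % 2 = 0 then x else y := by
  obtain ⟨S, hS, hcard⟩ := exists_subset_card_eq hm
  let e := S.orderEmbOfFin hcard
  have hψ (a : Fin m) : ψ (e a) = x ∧ ψ (succ (e a)) = y := by
    simpa using hS (S.orderEmbOfFin_mem hcard a)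
  have lt_succ_e (a : Fin m) : e a < succ (e a) :=
    (le_succ _).lt_of_ne fun heq => hxy (by rw [← (hψ a).1, heq, (hψ a).2])
  have succ_e_lt {a b : Fin m} (hab : a < b) : succ (e a) < e b :=
    (succ_le_of_lt (e.strictMono hab)).lt_of_ne fun heq =>
      hxy (by rw [← (hψ b).1, ← heq, (hψ a).2])
  let half (q : Fin (2 * m)) : Fin m := ⟨q / 2, by omega⟩
  refine ⟨fun q => if (q : ℕ) % 2 = 0 then e (half q) else succ (e (half q)), ?_, ?_⟩
  · intro p q hpq
    dsimp only
    obtain hhalf | hhalf := (Nat.div_le_div_right (c := 2) (Fin.le_def.1 hpq.le)).lt_or_eq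
    · calc (if (p : ℕ) % 2 = 0 then e (half p) else succ (e (half p)))
          ≤ succ (e (half p)) := by split_ifs <;> simp [le_succ]
        _ < e (half q) := succ_e_lt hhalf
        _ ≤ if (q : ℕ) % 2 = 0 then e (half q) else succ (e (half q)) := by
          split_ifs <;> simp [le_succ]
    · have hp : (p : ℕ) % 2 = 0 := by omega
      have hq : ¬ (q : ℕ) % 2 = 0 := by omega
      rw [if_pos hp, if_neg hq, show half p = half q from Fin.ext hhalf]
      exact lt_succ_e _
  · intro q
    dsimp only
    split_ifs
    exacts [(hψ _).1, (hψ _).2]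

theorem exists_permContains_isVerticalAlternation {n m : ℕ} {ρ : Type*} [LinearOrder ρ]
    (π : Equiv.Perm (Fin n)) {g : Fin n → ρ} (hg : Monotone g) {l l' : ρ} (hl : l ≠ l')
    (hm : m ≤ #{i | g (π i) = l ∧ g (π (succ i)) = l'}) :
    ∃ σ : Equiv.Perm (Fin (2 * m)), PermContains σ π ∧ IsVerticalAlternation σ := by
  obtain ⟨h, hmono, hgh⟩ := exists_strictMono_alternating (ψ := fun i => g (π i)) hl hm
  obtain ⟨σ, hσ⟩ := exists_perm_lt_iff_lt (p := fun q => π (h q)) (π.injective.comp hmono.injective)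
  refine ⟨σ, ⟨h, hmono, hσ⟩, ⟨m, rfl⟩, ?_⟩
  have heven {i : Fin (2 * m)} (hi : (i : ℕ) % 2 = 0) : g (π (h i)) = l := by simp [hgh, hi]
  have hodd {i : Fin (2 * m)} (hi : (i : ℕ) % 2 = 1) : g (π (h i)) = l' := by simp [hgh, hi]
  refine hl.lt_or_gt.imp (fun hlt i j hi hj => ?_) (fun hlt i j hi hj => ?_)
  · exact (hσ i j).2 (hg.reflect_lt (by rwa [heven hi, hodd hj]))
  · exact (hσ j i).2 (hg.reflect_lt (by rwa [heven hi, hodd hj]))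

end Alternations

section Changes

variable {α γ : Type*} [LinearOrder α] [SuccOrder α] [Fintype α] [DecidableEq γ]

/-- The points after which the colour assigned by `φ` changes. The maximum is never one of them,
since it is its own successor. -/
def changes (φ : α → γ) : Finset α := {i | φ i ≠ φ (succ i)}

theorem mem_changes {φ : α → γ} {i : α} : i ∈ changes φ ↔ φ i ≠ φ (succ i) := by simp [changes]

theorem exists_monotone_of_card_changes_lt {B : ℕ} {φ : α → γ} (hφ : #(changes φ) < B) :
    ∃ a : α → Fin B, Monotone a ∧ ∀ i j, a i = a j → φ i = φ j := by
  let a (i : α) : Fin B := ⟨#{x ∈ changes φ | x < i}, (card_filter_le _ _).trans_lt hφ⟩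
  have ha : Monotone a := fun i j hij =>
    card_le_card (monotone_filter_right _ fun _ _ hx => hx.trans_le hij)
  have lt_of_mem {i : α} (hi : i ∈ changes φ) : a i < a (succ i) := by
    have hlt : i < succ i := (le_succ i).lt_of_ne fun heq => mem_changes.1 hi (congrArg φ heq)
    refine card_lt_card ⟨monotone_filter_right _ fun _ _ hx => hx.trans hlt, fun hsub => ?_⟩
    exact lt_irrefl i (mem_filter.1 (hsub (mem_filter.2 ⟨hi, hlt⟩))).2
  have eq_of_le {i j : α} (hij : i ≤ j) : a i = a j → φ i = φ j := by
    induction hij using Succ.rec with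
    | rfl => exact fun _ => rfl
    | succ j hij ih =>
      intro heq
      have hstep : a j = a (succ j) := (ha (le_succ j)).antisymm (heq ▸ ha hij)
      rw [ih (heq.trans hstep.symm)]
      by_contra hne
      exact (lt_of_mem (mem_changes.2 hne)).ne hstep
  refine ⟨a, ha, fun i j heq => ?_⟩
  exact (le_total i j).elim (eq_of_le · heq) fun hji => (eq_of_le hji heq.symm).symm

theorem card_changes_le_card {κ : Type*} [LinearOrder κ] [Fintype κ] {f : α → κ}
    (hf : Monotone f) : #(changes f) ≤ Fintype.card κ := by
  have hstrict : StrictMonoOn f (changes f : Set α) := fun i hi j _ hij =>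
    ((hf (le_succ i)).lt_of_ne (mem_changes.1 hi)).trans_le (hf (succ_le_of_lt hij))
  exact card_le_card_of_injOn f (fun _ _ => mem_univ _) hstrict.injOn

theorem card_changes_prodMk_le {δ : Type*} [DecidableEq δ] (φ : α → γ) (ψ : α → δ) :
    #(changes fun i => (φ i, ψ i)) ≤ #(changes φ) + #(changes ψ) := by
  refine (card_le_card fun i hi => ?_).trans (card_union_le _ _)
  simp only [mem_union, mem_changes] at hi ⊢
  contrapose! hi
  rw [hi.1, hi.2]

theorem card_changes_row_le {n m : ℕ} {ρ : Type*} [LinearOrder ρ] [Fintype ρ]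
    {π : Equiv.Perm (Fin n)} {g : Fin n → ρ} (hg : Monotone g)
    (hπ : ∀ σ : Equiv.Perm (Fin (2 * m)), PermContains σ π → ¬ IsVerticalAlternation σ) :
    #(changes fun i => g (π i)) ≤ m * Fintype.card ρ ^ 2 := by
  have hfiber (p : ρ × ρ) :
      #{i ∈ changes fun i => g (π i) | (g (π i), g (π (succ i))) = p} ≤ m := by
    by_contra! hlt
    obtain ⟨i, hi⟩ := card_pos.1 (m.zero_le.trans_lt hlt)
    obtain ⟨hchange, rfl⟩ := mem_filter.1 hi
    have hle : m ≤ #{j | g (π j) = g (π i) ∧ g (π (succ j)) = g (π (succ i))} :=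
      hlt.le.trans (card_le_card fun j hj => by simpa using (mem_filter.1 hj).2)
    obtain ⟨σ, hσ, halt⟩ :=
      exists_permContains_isVerticalAlternation π hg (mem_changes.1 hchange) hle
    exact hπ σ hσ halt
  calc #(changes fun i => g (π i)) ≤ m * #(univ : Finset (ρ × ρ)) :=
        card_le_mul_card_image_of_maps_to (fun _ _ => mem_univ _) m fun p _ => hfiber p
    _ = m * Fintype.card ρ ^ 2 := by rw [card_univ, Fintype.card_prod, sq]

theorem card_changes_cell_le {n m : ℕ} {κ ρ : Type*} [LinearOrder κ] [LinearOrder ρ] [Fintype κ]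
    [Fintype ρ] {π : Equiv.Perm (Fin n)} {f : Fin n → κ} {g : Fin n → ρ} (hf : Monotone f)
    (hg : Monotone g)
    (hπ : ∀ σ : Equiv.Perm (Fin (2 * m)), PermContains σ π → ¬ IsVerticalAlternation σ) :
    #(changes fun i => (f i, g (π i))) ≤ Fintype.card κ + m * Fintype.card ρ ^ 2 :=
  (card_changes_prodMk_le _ _).trans (add_le_add (card_changes_le_card hf)
    (card_changes_row_le hg hπ))

end Changes

section UniversalMatching

variable {B : ℕ}

/-- Reverses the order of `Fin B` unless the sign is `1`. -/
def orient (s : SignType) (b : Fin B) : Fin B := if s = 1 then b else b.rev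

theorem orient_injective (s : SignType) : Function.Injective (orient (B := B) s) := by
  intro b b' h
  unfold orient at h
  split_ifs at h
  exacts [h, Fin.rev_injective h]

/-- The indices of the columns, and likewise of the rows, of the universal matching. -/
abbrev BlockLabel (B : ℕ) := Fin B ×ₗ SignType ×ₗ Fin B

/-- The part of line `a` that meets the perpendicular line `b` in a block of sign `s`. The lines
met by a decreasing line are listed in reverse order. -/
def blockLabel (s : SignType) (a b : Fin B) : BlockLabel B := toLex (a, toLex (s, orient s b))

theorem blockLabel_inj {s s' : SignType} {a a' b b' : Fin B} :
    blockLabel s a b = blockLabel s' a' b' ↔ s = s' ∧ a = a' ∧ b = b' := by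
  constructor
  · intro h
    simp only [blockLabel, EmbeddingLike.apply_eq_iff_eq, Prod.mk.injEq] at h
    obtain ⟨rfl, rfl, h⟩ := h
    exact ⟨rfl, rfl, orient_injective s h⟩
  · rintro ⟨rfl, rfl, rfl⟩
    rfl

/-- The matching with one cell of each sign at the crossing of any two of `B` columns and `B` rows;
it contains every matching obtained by refining a gridding whose cells change less than `B`
times in each direction. -/
noncomputable def universalMatching (B : ℕ) (x y : BlockLabel B) : SignType :=
  Function.extend
    (fun c : SignType × Fin B × Fin B =>
      (blockLabel c.1 c.2.1 c.2.2, blockLabel c.1 c.2.2 c.2.1))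
    Prod.fst 0 (x, y)

theorem universalMatching_blockLabel (s : SignType) (a b : Fin B) :
    universalMatching B (blockLabel s a b) (blockLabel s b a) = s := by
  have hinj : Function.Injective fun c : SignType × Fin B × Fin B =>
      (blockLabel c.1 c.2.1 c.2.2, blockLabel c.1 c.2.2 c.2.1) := fun c c' h => by
    obtain ⟨hs, ha, hb⟩ := blockLabel_inj.1 (congrArg Prod.fst h)
    exact Prod.ext hs (Prod.ext ha hb)
  exact hinj.extend_apply Prod.fst 0 (s, a, b)

theorem exists_blockLabel_of_universalMatching_ne_zero {x y : BlockLabel B}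
    (h : universalMatching B x y ≠ 0) : ∃ s a b, blockLabel s a b = x ∧ blockLabel s b a = y := by
  by_contra! hxy
  refine h (Function.extend_apply' _ _ _ ?_)
  rintro ⟨⟨s, a, b⟩, hc⟩
  exact hxy s a b (congrArg Prod.fst hc) (congrArg Prod.snd hc)

theorem isMatchingMat_universalMatching {t u : ℕ} (e : Fin t ≃ BlockLabel B)
    (e' : Fin u ≃ BlockLabel B) : IsMatchingMat fun k l => universalMatching B (e k) (e' l) := by
  constructor
  · intro k l l' hl hl'
    obtain ⟨s, a, b, hk, hl⟩ := exists_blockLabel_of_universalMatching_ne_zero hl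
    obtain ⟨s', a', b', hk', hl'⟩ := exists_blockLabel_of_universalMatching_ne_zero hl'
    obtain ⟨rfl, rfl, rfl⟩ := blockLabel_inj.1 (hk.trans hk'.symm)
    exact e'.injective (hl.symm.trans hl')
  · intro k k' l hk hk'
    obtain ⟨s, a, b, hk, hl⟩ := exists_blockLabel_of_universalMatching_ne_zero hk
    obtain ⟨s', a', b', hk', hl'⟩ := exists_blockLabel_of_universalMatching_ne_zero hk'
    obtain ⟨rfl, rfl, rfl⟩ := blockLabel_inj.1 (hl.trans hl'.symm)
    exact e.injective (hk.symm.trans hk')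

end UniversalMatching

section Refinement

variable {α β κ ρ : Type*} [LinearOrder α] [LinearOrder β] [Preorder κ] [Preorder ρ]
  {M : κ → ρ → SignType} {π : α ≃ β} {f : α → κ} {g : β → ρ} {B : ℕ}

theorem IsGridLabelling.monotone_blockLabel (h : IsGridLabelling M π f g) {a : α → Fin B}
    {b : β → Fin B} (ha : Monotone a) (hb : Monotone b)
    (hcell : ∀ i j, a i = a j → (f i, g (π i)) = (f j, g (π j))) :
    Monotone fun i => blockLabel (M (f i) (g (π i))) (a i) (b (π i)) := by
  intro i j hij
  refine Prod.Lex.toLex_le_toLex.2 ((ha hij).lt_or_eq.imp id fun haij => ⟨haij, ?_⟩)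
  obtain ⟨hf, hg⟩ := Prod.mk.inj (hcell i j haij)
  rw [hf, hg, Prod.Lex.toLex_le_toLex]
  refine .inr ⟨rfl, ?_⟩
  obtain hs | hs | hs := (M (f j) (g (π j))).trichotomy
  · have hπ : π j ≤ π i := ((h.hasSignOn _ _).2.1 hs).antitoneOn ⟨hf, hg⟩ ⟨rfl, rfl⟩ hij
    simpa [orient, hs] using hb hπ
  · exact absurd hs (h.ne_zero j)
  · have hπ : π i ≤ π j := ((h.hasSignOn _ _).1 hs).monotoneOn ⟨hf, hg⟩ ⟨rfl, rfl⟩ hij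
    simpa [orient, hs] using hb hπ

theorem IsGridLabelling.universalMatching_of_refines (h : IsGridLabelling M π f g)
    {a : α → Fin B} {b : β → Fin B} (ha : Monotone a) (hb : Monotone b)
    (hacell : ∀ i j, a i = a j → (f i, g (π i)) = (f j, g (π j)))
    (hbcell : ∀ v w, b v = b w → (g v, f (π.symm v)) = (g w, f (π.symm w))) :
    IsGridLabelling (universalMatching B) π
      (fun i => blockLabel (M (f i) (g (π i))) (a i) (b (π i)))
      (fun v => blockLabel (M (f (π.symm v)) (g v)) (b v) (a (π.symm v))) where
  monotone_col := h.monotone_blockLabel ha hb hacell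
  monotone_row := h.symm.monotone_blockLabel hb ha hbcell
  hasSignOn k l := by
    simp only [Equiv.symm_apply_apply]
    obtain hempty | ⟨i, rfl, rfl⟩ := Set.eq_empty_or_nonempty {i |
      blockLabel (M (f i) (g (π i))) (a i) (b (π i)) = k ∧
        blockLabel (M (f i) (g (π i))) (b (π i)) (a i) = l}
    · exact hempty ▸ HasSignOn.empty
    · rw [universalMatching_blockLabel]
      refine (h.hasSignOn (f i) (g (π i))).mono fun j hj => ?_
      exact Prod.mk.inj (hacell j i (blockLabel_inj.1 hj.1).2.1)

theorem IsGridLabelling.exists_universalMatching [Fintype α] [SuccOrder α] [Fintype β]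
    [SuccOrder β] [DecidableEq κ] [DecidableEq ρ] (h : IsGridLabelling M π f g)
    (hcol : #(changes fun i => (f i, g (π i))) < B)
    (hrow : #(changes fun v => (g v, f (π.symm v))) < B) :
    ∃ F G, IsGridLabelling (universalMatching B) π F G := by
  obtain ⟨a, ha, hacell⟩ := exists_monotone_of_card_changes_lt hcol
  obtain ⟨b, hb, hbcell⟩ := exists_monotone_of_card_changes_lt hrow
  exact ⟨_, _, h.universalMatching_of_refines ha hb hacell hbcell⟩

end Refinement

theorem IsPermClass.exists_isMatchingMat_inGrid {C : ∀ n : ℕ, Set (Equiv.Perm (Fin n))}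
    (hC : IsPermClass C) {t u : ℕ} {M : Fin t → Fin u → SignType}
    (hgrid : ∀ n, ∀ π ∈ C n, InGrid M π) {m : ℕ}
    (hshort : ∀ σ ∈ C (2 * m), ¬ IsVerticalAlternation σ ∧ ¬ IsVerticalAlternation σ⁻¹) :
    ∃ (t' u' : ℕ) (M' : Fin t' → Fin u' → SignType), IsMatchingMat M' ∧
      ∀ n, ∀ π ∈ C n, InGrid M' π := by
  let B := (t + m * u ^ 2) + (u + m * t ^ 2) + 1
  let e := monoEquivOfFin (BlockLabel B) rfl
  refine ⟨_, _, _, isMatchingMat_universalMatching e.toEquiv e.toEquiv, fun n π hπ => ?_⟩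
  obtain ⟨f, g, h⟩ := (hgrid n π hπ).exists_isGridLabelling
  have hcol : #(changes fun i => (f i, g (π i))) ≤ t + m * u ^ 2 := by
    simpa using card_changes_cell_le h.monotone_col h.monotone_row fun σ hσ =>
      (hshort σ (hC _ _ σ π hπ hσ)).1
  have hrow : #(changes fun v => (g v, f (π.symm v))) ≤ u + m * t ^ 2 := by
    simpa using card_changes_cell_le (π := π⁻¹) h.monotone_row h.monotone_col fun σ hσ hv =>
      (hshort σ⁻¹ (hC _ _ σ⁻¹ π hπ (by simpa using hσ.inv))).2 (by simpa using hv)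
  obtain ⟨F, G, hFG⟩ := h.exists_universalMatching (B := B) (by omega) (by omega)
  exact hFG.inGrid e e

/-- **Proposition.** A griddable permutation class lies in the grid class of a matching if
and only if it does not contain arbitrarily long alternations. -/
theorem griddable_matching_iff_no_long_alternations
    (C : ∀ n : ℕ, Set (Equiv.Perm (Fin n))) (hC : IsPermClass C)
    (hgrid : ∃ (t u : ℕ) (M : Fin t → Fin u → SignType), ∀ n : ℕ, ∀ π ∈ C n, InGrid M π) :
    (∃ (t u : ℕ) (M : Fin t → Fin u → SignType), IsMatchingMat M ∧
        ∀ n : ℕ, ∀ π ∈ C n, InGrid M π) ↔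
      ¬ ContainsArbitrarilyLongAlternations C := by
  constructor
  · rintro ⟨t, u, M, hM, hgrid⟩ hlong
    obtain ⟨n, π, hπ, hn, halt⟩ := hlong (2 * (t + u) + 1)
    obtain ⟨f, g, h⟩ := (hgrid n π hπ).exists_isGridLabelling
    have hle : n ≤ 2 * t ∨ n ≤ 2 * u := by
      simpa using halt.imp (·.length_le h hM.1) (·.length_le h.symm fun l k k' => hM.2 k k' l)
    omega
  · intro hshort
    obtain ⟨m, hm⟩ := not_forall.1 hshort
    obtain ⟨t, u, M, hgrid⟩ := hgrid
    refine hC.exists_isMatchingMat_inGrid hgrid (m := m) fun σ hσ => not_or.1 fun halt => ?_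
    exact hm ⟨2 * m, σ, hσ, by omega, halt⟩
end
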